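/- arXiv:1503.08057 — 2 statements merged into one kernel-verified Lean document; each statement's English description precedes it below -/
import Mathlib

section
/- Let G be a graph containing no triangle and no induced cycle of even length at least 6, let v be a vertex of G and (N_0, N_1, …) be the v-levelling. Let P be a rooted PCP of order ℓ in a level N_k for some k ≥ 2, with leftovers at least δ, and let A = N(G_ℓ) ∩ N_{k−1} (the active lift of the PCP). If γ is a positive real such that for every stable set S ⊆ A one has χ(N(S) ∩ N_k) ≤ γ, then χ(A) ≥ δ/γ. -/
/-!
The neighbourhood of the active lift `A` covers the last block `H`. Indeed, let `w ∈ H` and let `u`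
be a neighbour of `w` in the level `N_{k-1}`; suppose `u` has no neighbour in the last regular block
`B`, with ends `x` and `y`. Three induced paths are glued.

* `R` runs from `y` along the last path and through `H` to a first neighbour of `u`.
* `L` runs from `x` to a first neighbour of `u`, through the earlier part of the PCP, the root and
  the levels below `k - 1`. None of these vertices other than `x` has a neighbour in the rest of the
  PCP that avoids `x`: the root only sees the origin, and levels differing by two are not adjacent.
* `M` joins `x` to `y` inside `B`, and its parity can be chosen.

Together with `u` they form an induced cycle. Neither `x` nor `y` is adjacent to `u`, so each of the
three paths has an edge; the total length, once made even, is at least `6`, a contradiction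
(`PCP.exists_adj_block`). Taking shortest walks in the relevant vertex sets makes `L` and `R`
induced with a single neighbour of `u` (`exists_induced_path_to_nbr`).

An optimal colouring of `A` then splits `H` into `χ(A)` parts, each in the neighbourhood of a stable
subset of `A` and hence of chromatic number at most `γ`, so `δ ≤ χ(H) ≤ χ(A) γ` (`chiSet_le_mul`).
-/

open SimpleGraph

/-- The chromatic number of `G`, as a natural number. -/
noncomputable def chi {V : Type} (G : SimpleGraph V) : ℕ := G.chromaticNumber.toNat

/-- The chromatic number of the subgraph of `G` induced by the vertex set `A`. -/
noncomputable def chiSet {V : Type} (G : SimpleGraph V) (A : Set V) : ℕ :=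
  (G.induce A).chromaticNumber.toNat

/-- `G` contains no induced cycle of length `n`: there is no graph embedding
(induced-subgraph embedding) of the `n`-cycle into `G`. -/
def NoInducedCycle {V : Type} (G : SimpleGraph V) (n : ℕ) : Prop :=
  IsEmpty (cycleGraph n ↪g G)

/-- The `k`-th level of the `v`-levelling: vertices at distance exactly `k` from `v`. -/
def level {V : Type} (G : SimpleGraph V) (v : V) (k : ℕ) : Set V :=
  {x | G.Reachable v x ∧ G.dist v x = k}

/-- `N(S)`: the set of vertices adjacent to at least one vertex of `S`. -/
def neighborsOf {V : Type} (G : SimpleGraph V) (S : Set V) : Set V :=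
  {x | ∃ s ∈ S, G.Adj s x}

/-- A walk is an induced path: it is a path, and its vertex set induces
no edges other than the path edges. -/
def IsInducedPathW {V : Type} {G : SimpleGraph V} {u w : V} (p : G.Walk u w) : Prop :=
  p.IsPath ∧ ∀ a ∈ p.support, ∀ b ∈ p.support, G.Adj a b → s(a, b) ∈ p.edges

/-- A Parity Changing Path (PCP) of order `ℓ` in `G`: regular blocks `block 0, …, block (ℓ-1)`
(vertex sets of induced subgraphs), a last block `lastBlock`, induced paths `path i` of
length at least `2` from `y i ∈ block i` to `x i.succ`, with the prescribed shared vertices,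
disjointness and edge conditions, an induced odd and an induced even `x i`–`y i` path inside
each regular block, `lastBlock` connected and each regular block `4`-colorable. -/
structure PCP {V : Type} (G : SimpleGraph V) (ℓ : ℕ) where
  block : Fin ℓ → Set V
  lastBlock : Set V
  x : Fin (ℓ + 1) → V
  y : Fin ℓ → V
  path : (i : Fin ℓ) → G.Walk (y i) (x i.succ)
  x_mem : ∀ i : Fin ℓ, x i.castSucc ∈ block i
  y_mem : ∀ i : Fin ℓ, y i ∈ block i
  xlast_mem : x (Fin.last ℓ) ∈ lastBlock
  path_induced : ∀ i, IsInducedPathW (path i)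
  path_length : ∀ i, 2 ≤ (path i).length
  blocks_disjoint : ∀ i j, i ≠ j → Disjoint (block i) (block j)
  block_last_disjoint : ∀ i, Disjoint (block i) lastBlock
  block_path_inter : ∀ i j : Fin ℓ, ∀ w ∈ block i, w ∈ (path j).support →
      (j = i ∧ w = y i) ∨ ((j : ℕ) + 1 = (i : ℕ) ∧ w = x i.castSucc)
  last_path_inter : ∀ j : Fin ℓ, ∀ w ∈ lastBlock, w ∈ (path j).support →
      (j : ℕ) + 1 = ℓ ∧ w = x (Fin.last ℓ)
  paths_disjoint : ∀ i j : Fin ℓ, i ≠ j → ∀ w,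
      w ∈ (path i).support → w ∈ (path j).support → False
  edges_within : ∀ a b : V,
      a ∈ (⋃ i, block i) ∪ lastBlock ∪ (⋃ i, {w | w ∈ (path i).support}) →
      b ∈ (⋃ i, block i) ∪ lastBlock ∪ (⋃ i, {w | w ∈ (path i).support}) →
      G.Adj a b →
      (∃ i, a ∈ block i ∧ b ∈ block i) ∨ (a ∈ lastBlock ∧ b ∈ lastBlock) ∨
        (∃ i, a ∈ (path i).support ∧ b ∈ (path i).support)
  odd_path : ∀ i : Fin ℓ, ∃ p : G.Walk (x i.castSucc) (y i),
      IsInducedPathW p ∧ (∀ w ∈ p.support, w ∈ block i) ∧ Odd p.length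
  even_path : ∀ i : Fin ℓ, ∃ p : G.Walk (x i.castSucc) (y i),
      IsInducedPathW p ∧ (∀ w ∈ p.support, w ∈ block i) ∧ Even p.length
  last_connected : (G.induce lastBlock).Connected
  block_chrom : ∀ i, (G.induce (block i)).chromaticNumber ≤ 4

/-- The origin of a PCP. -/
def PCP.origin {V : Type} {G : SimpleGraph V} {ℓ : ℕ} (P : PCP G ℓ) : V := P.x 0

/-- The vertex set of a PCP. -/
def PCP.support {V : Type} {G : SimpleGraph V} {ℓ : ℕ} (P : PCP G ℓ) : Set V :=
  (⋃ i, P.block i) ∪ P.lastBlock ∪ (⋃ i, {w | w ∈ (P.path i).support})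

/-- The leftovers of a PCP: the chromatic number of its last block. -/
noncomputable def PCP.leftovers {V : Type} {G : SimpleGraph V} {ℓ : ℕ} (P : PCP G ℓ) : ℕ :=
  chiSet G P.lastBlock

/-- A strong PCP: every regular block contains an induced 5-cycle. -/
def PCP.IsStrong {V : Type} {G : SimpleGraph V} {ℓ : ℕ} (P : PCP G ℓ) : Prop :=
  ∀ i : Fin ℓ, ∃ f : cycleGraph 5 ↪g G, ∀ t, f t ∈ P.block i

/-- A PCP lies in the level `N_k` of the `v`-levelling and is rooted there: some vertex
`u' ∈ N_{k-1}` is adjacent to the origin and to no other vertex of the PCP. -/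
def PCP.IsRootedInLevel {V : Type} {G : SimpleGraph V} {ℓ : ℕ} (P : PCP G ℓ)
    (v : V) (k : ℕ) : Prop :=
  P.support ⊆ level G v k ∧
    ∃ u' ∈ level G v (k - 1), G.Adj u' P.origin ∧
      ∀ w ∈ P.support, w ≠ P.origin → ¬ G.Adj u' w

/-! ### Walks inside a vertex set, and shortest ones -/

/-- `a` and `b` are joined by a walk of `G` all of whose vertices lie in `X`. -/
def WalkIn {V : Type} (G : SimpleGraph V) (X : Set V) (a b : V) : Prop :=
  ∃ p : G.Walk a b, ∀ w ∈ p.support, w ∈ X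

lemma WalkIn.trans {V : Type} {G : SimpleGraph V} {X : Set V} {a b c : V}
    (h : WalkIn G X a b) (h' : WalkIn G X b c) : WalkIn G X a c := by
  obtain ⟨p, hp⟩ := h
  obtain ⟨q, hq⟩ := h'
  refine ⟨p.append q, fun w hw => ?_⟩
  rcases (Walk.mem_support_append_iff p q).1 hw with h | h
  exacts [hp w h, hq w h]

lemma WalkIn.symm {V : Type} {G : SimpleGraph V} {X : Set V} {a b : V}
    (h : WalkIn G X a b) : WalkIn G X b a := by
  obtain ⟨p, hp⟩ := h
  exact ⟨p.reverse, fun w hw => hp w (by simpa using hw)⟩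

lemma WalkIn.mono {V : Type} {G : SimpleGraph V} {X Y : Set V} {a b : V}
    (h : WalkIn G X a b) (hXY : X ⊆ Y) : WalkIn G Y a b := by
  obtain ⟨p, hp⟩ := h
  exact ⟨p, fun w hw => hXY (hp w hw)⟩

lemma WalkIn.of_adj {V : Type} {G : SimpleGraph V} {X : Set V} {a b : V}
    (h : G.Adj a b) (ha : a ∈ X) (hb : b ∈ X) : WalkIn G X a b :=
  ⟨h.toWalk, fun w hw => by
    have : w = a ∨ w = b := by simpa using hw
    rcases this with rfl | rfl <;> assumption⟩

lemma WalkIn.of_connected {V : Type} {G : SimpleGraph V} {X : Set V} {a b : V}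
    (h : (G.induce X).Connected) (ha : a ∈ X) (hb : b ∈ X) : WalkIn G X a b := by
  obtain ⟨p⟩ := h.preconnected ⟨a, ha⟩ ⟨b, hb⟩
  refine ⟨p.map (Embedding.induce X).toHom, fun w hw => ?_⟩
  have hw' := Walk.support_map (Embedding.induce X : G.induce X ↪g G).toHom p ▸ hw
  obtain ⟨z, -, rfl⟩ := List.mem_map.1 hw'
  exact z.2

/-- A shortest walk inside `X` from `x` to the neighbourhood of `u` is an induced path, and only
its end is adjacent to `u`. -/
lemma exists_induced_path_to_nbr {V : Type} {G : SimpleGraph V} {X : Set V} {x z u : V}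
    (h : WalkIn G X x z) (hz : G.Adj u z) :
    ∃ t, ∃ p : G.Walk x t, IsInducedPathW p ∧ (∀ w ∈ p.support, w ∈ X) ∧ G.Adj u t ∧
      ∀ w ∈ p.support, G.Adj u w → w = t := by
  classical
  have hex : ∃ n, ∃ t, ∃ p : G.Walk x t, (∀ w ∈ p.support, w ∈ X) ∧ G.Adj u t ∧ p.length = n := by
    obtain ⟨p, hp⟩ := h
    exact ⟨_, z, p, hp, hz, rfl⟩
  obtain ⟨t, p, hpX, hut, hlen⟩ := Nat.find_spec hex
  have hmin : ∀ t' (q : G.Walk x t'), (∀ w ∈ q.support, w ∈ X) → G.Adj u t' →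
      p.length ≤ q.length := fun t' q h1 h2 => by
    rw [hlen]; exact Nat.find_min' hex ⟨t', q, h1, h2, rfl⟩
  have key : ∀ i j, i < j → j ≤ p.length → G.Adj (p.getVert i) (p.getVert j) → j = i + 1 := by
    intro i j hij hj hadj
    have := hmin t ((p.take i).append (.cons hadj (p.drop j))) (by
      intro w hw
      rw [Walk.mem_support_append_iff, Walk.support_cons, List.mem_cons] at hw
      rcases hw with hw | rfl | hw
      · exact hpX w ((Walk.isSubwalk_take p i).support_subset hw)
      · exact hpX _ (p.getVert_mem_support i)
      · exact hpX w ((Walk.isSubwalk_drop p j).support_subset hw)) hut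
    simp only [Walk.length_append, Walk.length_cons, Walk.take_length, Walk.drop_length] at this
    omega
  refine ⟨t, p, ⟨?_, ?_⟩, hpX, hut, ?_⟩
  · have := hmin t p.bypass (fun w hw => hpX w (p.support_bypass_subset_support hw)) hut
    rw [← Walk.bypass_eq_self_of_length_le_length_bypass p this]
    exact p.bypass_isPath
  · intro a ha b hb hab
    obtain ⟨i, rfl, hi⟩ := Walk.mem_support_iff_exists_getVert.1 ha
    obtain ⟨j, rfl, hj⟩ := Walk.mem_support_iff_exists_getVert.1 hb
    rw [Walk.mk_mem_edges_iff_exists]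
    rcases lt_trichotomy i j with hij | rfl | hij
    · obtain rfl := key i j hij hj hab
      exact ⟨i, by omega, rfl⟩
    · exact absurd hab (G.loopless.irrefl _)
    · obtain rfl := key j i hij hi hab.symm
      exact ⟨j, by omega, Sym2.eq_swap⟩
  · intro w hw huw
    have h1 := hmin w (p.takeUntil w hw)
      (fun a ha => hpX a (p.support_takeUntil_subset_support hw ha)) huw
    have h2 := congrArg Walk.length (p.take_spec hw)
    rw [Walk.length_append] at h2
    exact Walk.eq_of_length_eq_zero (p := p.dropUntil w hw) (by omega)

/-! ### Gluing induced paths and closing induced cycles -/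

lemma IsInducedPathW.reverse {V : Type} {G : SimpleGraph V} {a b : V} {p : G.Walk a b}
    (hp : IsInducedPathW p) : IsInducedPathW p.reverse :=
  ⟨hp.1.reverse, by simpa using hp.2⟩

/-- Two induced paths sharing an end concatenate to an induced path when they have no other common
vertex and no edge between them avoids the common end. -/
lemma IsInducedPathW.append {V : Type} {G : SimpleGraph V} {a b c : V} {p : G.Walk a b}
    {q : G.Walk b c} (hp : IsInducedPathW p) (hq : IsInducedPathW q)
    (h : ∀ s ∈ p.support, ∀ t ∈ q.support, s = t ∨ G.Adj s t → s = b ∨ t = b) :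
    IsInducedPathW (p.append q) := by
  refine ⟨?_, ?_⟩
  · rw [Walk.isPath_def, Walk.support_append, List.nodup_append']
    refine ⟨hp.1.support_nodup, hq.1.support_nodup.tail, ?_⟩
    intro s hs ht
    have hb : b ∉ q.support.tail := by
      have := hq.1.support_nodup
      rw [← Walk.cons_tail_support] at this
      exact (List.nodup_cons.1 this).1
    have hs' : s = b := by
      rcases h s hs s (List.mem_of_mem_tail ht) (.inl rfl) with h | h <;> exact h
    exact hb (hs' ▸ ht)
  · have cross : ∀ s ∈ p.support, ∀ t ∈ q.support, G.Adj s t → s(s, t) ∈ (p.append q).edges := by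
      intro s hs t ht hst
      rw [Walk.edges_append, List.mem_append]
      rcases h s hs t ht (.inr hst) with rfl | rfl
      · exact .inr (hq.2 _ q.start_mem_support _ ht hst)
      · exact .inl (hp.2 _ hs _ p.end_mem_support hst)
    intro s hs t ht hst
    rw [Walk.mem_support_append_iff] at hs ht
    rcases hs with hs | hs <;> rcases ht with ht | ht
    · rw [Walk.edges_append, List.mem_append]; exact .inl (hp.2 s hs t ht hst)
    · exact cross s hs t ht hst
    · rw [Sym2.eq_swap]; exact cross t ht s hs hst.symm
    · rw [Walk.edges_append, List.mem_append]; exact .inr (hq.2 s hs t ht hst)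

lemma IsInducedPathW.getVert_adj_iff {V : Type} {G : SimpleGraph V} {a b : V} {p : G.Walk a b}
    (hp : IsInducedPathW p) {i j : ℕ} (hi : i ≤ p.length) (hj : j ≤ p.length) :
    G.Adj (p.getVert i) (p.getVert j) ↔ i + 1 = j ∨ j + 1 = i := by
  constructor
  · intro h
    have := hp.2 _ (p.getVert_mem_support i) _ (p.getVert_mem_support j) h
    rw [Walk.mk_mem_edges_iff_exists] at this
    obtain ⟨m, hm, he⟩ := this
    have inj := fun {r s : ℕ} (hr : r ≤ p.length) (hs : s ≤ p.length) =>
      hp.1.getVert_injOn (x₁ := r) (x₂ := s) hr hs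
    rcases Sym2.eq_iff.1 he with ⟨h1, h2⟩ | ⟨h1, h2⟩
    · have := inj (by omega) hi h1
      have := inj (by omega) hj h2
      omega
    · have := inj (by omega) hj h1
      have := inj (by omega) hi h2
      omega
  · rintro (rfl | rfl)
    · exact p.adj_getVert_succ (by omega)
    · exact (p.adj_getVert_succ (by omega)).symm

/-- An induced path together with a further vertex adjacent exactly to the two ends of the path
is an induced cycle. -/
lemma IsInducedPathW.cycle {V : Type} {G : SimpleGraph V} {a b u : V} {p : G.Walk a b}
    (hp : IsInducedPathW p) (hlen : 1 ≤ p.length) (hu : u ∉ p.support) (hua : G.Adj u a)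
    (hub : G.Adj u b) (hends : ∀ w ∈ p.support, G.Adj u w → w = a ∨ w = b) :
    ¬ NoInducedCycle G (p.length + 2) := by
  have inj := fun {r s : ℕ} (hr : r ≤ p.length) (hs : s ≤ p.length) =>
      hp.1.getVert_injOn (x₁ := r) (x₂ := s) hr hs
  have hne : ∀ i, p.getVert i ≠ u := fun i h => hu (h ▸ p.getVert_mem_support i)
  have hadj : ∀ i, i ≤ p.length → (G.Adj u (p.getVert i) ↔ i = 0 ∨ i = p.length) := by
    intro i hi
    constructor
    · intro h
      rcases hends _ (p.getVert_mem_support i) h with h | h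
      · exact .inl (inj hi (Nat.zero_le _) (h.trans p.getVert_zero.symm))
      · exact .inr (inj hi le_rfl (h.trans p.getVert_length.symm))
    · rintro (rfl | rfl)
      · simpa using hua
      · simpa using hub
  let f : Fin (p.length + 2) → V := fun i => if i.val ≤ p.length then p.getVert i.val else u
  have hf : Function.Injective f := by
    intro i j hij
    have hi := i.2
    have hj := j.2
    apply Fin.ext
    by_cases h1 : i.val ≤ p.length <;> by_cases h2 : j.val ≤ p.length <;>
      simp only [f, h1, h2, if_true, if_false] at hij
    · exact inj h1 h2 hij
    · exact absurd hij (hne _)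
    · exact absurd hij.symm (hne _)
    · omega
  have hcyc : ∀ i j : Fin (p.length + 2), (cycleGraph (p.length + 2)).Adj i j ↔
      (i.val + 1 = j.val ∨ j.val + 1 = i.val ∨ (i.val = 0 ∧ j.val = p.length + 1) ∨
        (j.val = 0 ∧ i.val = p.length + 1)) := by
    intro i j
    have hi := i.2
    have hj := j.2
    rw [cycleGraph_adj']
    rcases lt_trichotomy i j with h | h | h
    · have h' : i.val < j.val := h
      rw [Fin.coe_sub_iff_le.2 h.le, Fin.coe_sub_iff_lt.2 h]
      omega
    · subst h
      rw [Fin.coe_sub_iff_le.2 le_rfl]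
      omega
    · have h' : j.val < i.val := h
      rw [Fin.coe_sub_iff_le.2 h.le, Fin.coe_sub_iff_lt.2 h]
      omega
  refine fun hno => hno.false ⟨⟨f, hf⟩, ?_⟩
  intro i j
  have hi := i.2
  have hj := j.2
  rw [hcyc]
  change G.Adj (f i) (f j) ↔ _
  by_cases h1 : i.val ≤ p.length <;> by_cases h2 : j.val ≤ p.length <;>
    simp only [f, h1, h2, if_true, if_false]
  · rw [hp.getVert_adj_iff h1 h2]; omega
  · rw [G.adj_comm, hadj _ h1]; omega
  · rw [hadj _ h2]; omega
  · constructor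
    · exact fun h => absurd h (G.loopless.irrefl _)
    · omega

/-! ### Distance levels -/

lemma exists_adj_level_pred {V : Type} {G : SimpleGraph V} {v w : V} {k : ℕ} (hk : 1 ≤ k)
    (hw : w ∈ level G v k) : ∃ u ∈ level G v (k - 1), G.Adj u w := by
  obtain ⟨hr, hd⟩ := hw
  obtain ⟨p, hp⟩ := hr.exists_walk_length_eq_dist
  have hnil : ¬ p.Nil := by
    rw [← Walk.length_eq_zero_iff]; omega
  refine ⟨p.penultimate, ⟨⟨p.dropLast⟩, ?_⟩, p.adj_penultimate hnil⟩
  have h1 := dist_le p.dropLast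
  have h2 := p.length_dropLast
  have hr' : G.Reachable v p.penultimate := ⟨p.dropLast⟩
  obtain ⟨q, hq⟩ := hr'.exists_walk_length_eq_dist
  have h3 := dist_le (q.concat (p.adj_penultimate hnil))
  rw [Walk.length_concat] at h3
  omega

lemma walkIn_level_le {V : Type} {G : SimpleGraph V} {v w : V} {k : ℕ} (hw : w ∈ level G v k) :
    WalkIn G {z | G.dist v z ≤ k} v w := by
  classical
  obtain ⟨hr, hd⟩ := hw
  obtain ⟨p, hp⟩ := hr.exists_walk_length_eq_dist
  refine ⟨p, fun z hz => ?_⟩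
  have h1 := dist_le (p.takeUntil z hz)
  have h2 := congrArg Walk.length (p.take_spec hz)
  rw [Walk.length_append] at h2
  change G.dist v z ≤ k
  omega

lemma level_dist_le_of_adj {V : Type} {G : SimpleGraph V} {v a b : V} {k : ℕ}
    (hb : b ∈ level G v k) (hab : G.Adj a b) : k ≤ G.dist v a + 1 := by
  obtain ⟨hr, hd⟩ := hb
  obtain ⟨q, hq⟩ := (hr.trans hab.symm.reachable).exists_walk_length_eq_dist
  have h3 := dist_le (q.concat hab)
  rw [Walk.length_concat] at h3
  omega

/-! ### Colouring a set dominated by `A` -/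

/-- If the neighbourhoods of the stable subsets of `A` induce chromatic number at most `γ` and the
neighbourhood of `A` covers `H`, then colouring each vertex of `H` by the colour of a chosen
neighbour in `A` and by its colour in the neighbourhood of that colour class bounds `χ(H)`. -/
lemma chiSet_le_mul {V : Type} [Fintype V] {G : SimpleGraph V} {A H L : Set V} {γ : ℝ}
    (hγ : 0 < γ) (hHL : H ⊆ L) (hdom : ∀ w ∈ H, ∃ a ∈ A, G.Adj a w)
    (hstab : ∀ S ⊆ A, (S.Pairwise fun a b => ¬ G.Adj a b) →
      (chiSet G (neighborsOf G S ∩ L) : ℝ) ≤ γ) :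
    (chiSet G H : ℝ) ≤ chiSet G A * γ := by
  obtain ⟨C⟩ : (G.induce A).Colorable (chiSet G A) :=
    colorable_chromaticNumber_of_fintype (G.induce A)
  let S : Fin (chiSet G A) → Set V := fun i => {a | ∃ h : a ∈ A, C ⟨a, h⟩ = i}
  have hS : ∀ i, (G.induce (neighborsOf G (S i) ∩ L)).Colorable ⌊γ⌋₊ := by
    intro i
    have h := hstab (S i) (fun a ⟨h, _⟩ => h) (by
      rintro a ⟨ha, hai⟩ b ⟨hb, hbi⟩ - hab
      exact C.valid (v := ⟨a, ha⟩) (w := ⟨b, hb⟩) hab (hai.trans hbi.symm))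
    exact (colorable_chromaticNumber_of_fintype (G.induce (neighborsOf G (S i) ∩ L))).mono
      (Nat.le_floor h)
  have D := fun i => (hS i).some
  choose f hfA hf using hdom
  let c : (w : V) → w ∈ H → Fin (chiSet G A) := fun w hw => C ⟨f w hw, hfA w hw⟩
  have hmem : ∀ w (hw : w ∈ H) i, c w hw = i → w ∈ neighborsOf G (S i) ∩ L :=
    fun w hw i hi => ⟨⟨f w hw, ⟨hfA w hw, hi⟩, hf w hw⟩, hHL hw⟩
  have hcol : (G.induce H).Coloring (Fin (chiSet G A) × Fin ⌊γ⌋₊) := by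
    refine Coloring.mk (fun w => (c w.1 w.2, D (c w.1 w.2) ⟨w.1, hmem _ _ _ rfl⟩)) ?_
    rintro ⟨w, hw⟩ ⟨z, hz⟩ hwz heq
    obtain ⟨h1, h2⟩ := Prod.mk.inj heq
    have : ∀ i (hi : c w hw = i), D (c w hw) ⟨w, hmem _ _ _ rfl⟩ = D i ⟨w, hmem _ _ _ hi⟩ := by
      rintro i rfl; rfl
    exact (D (c z hz)).valid (v := ⟨w, hmem _ _ _ h1⟩) (w := ⟨z, hmem _ _ _ rfl⟩) hwz
      ((this _ h1).symm.trans h2)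
  have hle : chiSet G H ≤ chiSet G A * ⌊γ⌋₊ := by
    have := hcol.colorable.chromaticNumber_le
    rw [Fintype.card_prod, Fintype.card_fin, Fintype.card_fin] at this
    exact ENat.toNat_le_of_le_natCast this
  calc (chiSet G H : ℝ) ≤ ((chiSet G A * ⌊γ⌋₊ : ℕ) : ℝ) := by exact_mod_cast hle
    _ = chiSet G A * (⌊γ⌋₊ : ℝ) := by push_cast; rfl
    _ ≤ _ := by gcongr; exact Nat.floor_le hγ.le

/-! ### Adjacency between the parts of a PCP -/

/-- The part of a PCP that precedes the vertex `x i`: the earlier blocks and paths, and `x i`. -/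
def PCP.before {V : Type} {G : SimpleGraph V} {ℓ : ℕ} (P : PCP G ℓ) (i : Fin (ℓ + 1)) : Set V :=
  {w | w = P.x i ∨ (∃ j : Fin ℓ, j.val < i.val ∧ (w ∈ P.block j ∨ w ∈ (P.path j).support))}

lemma PCP.walkIn_before {V : Type} {G : SimpleGraph V} {ℓ : ℕ} (P : PCP G ℓ)
    (i : Fin (ℓ + 1)) : WalkIn G (P.before i) (P.x 0) (P.x i) := by
  induction i using Fin.induction with
  | zero => exact ⟨.nil, fun w hw => .inl (by simpa using hw)⟩
  | succ i ih =>
    have hle : P.before i.castSucc ⊆ P.before i.succ := by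
      rintro w (rfl | ⟨j, hj, h⟩)
      · exact .inr ⟨i, by simp, .inl (P.x_mem i)⟩
      · exact .inr ⟨j, by simp at hj ⊢; omega, h⟩
    obtain ⟨p, -, hp, -⟩ := P.odd_path i
    have h1 : WalkIn G (P.before i.succ) (P.x i.castSucc) (P.y i) :=
      ⟨p, fun w hw => .inr ⟨i, by simp, .inl (hp w hw)⟩⟩
    have h2 : WalkIn G (P.before i.succ) (P.y i) (P.x i.succ) :=
      ⟨P.path i, fun w hw => .inr ⟨i, by simp, .inr hw⟩⟩
    exact ((ih.mono hle).trans h1).trans h2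

/-- A vertex of the last regular block that equals or is adjacent to a vertex of the last path or of
the last block does so at `y`: one of the two vertices is `y`. -/
lemma PCP.block_after {V : Type} {G : SimpleGraph V} {ℓ : ℕ} (P : PCP G ℓ) (i : Fin ℓ)
    (hi : i.val + 1 = ℓ) {s t : V} (hs : s ∈ P.block i)
    (ht : t ∈ (P.path i).support ∨ t ∈ P.lastBlock) (hst : s = t ∨ G.Adj s t) :
    s = P.y i ∨ t = P.y i := by
  have hd : ∀ j w, w ∈ P.block j → w ∉ P.lastBlock := fun j w h h' =>
    Set.disjoint_left.1 (P.block_last_disjoint j) h h'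
  have hbp := P.block_path_inter
  have hbb : ∀ j j' w, w ∈ P.block j → w ∈ P.block j' → j = j' := fun j j' w h h' => by
    by_contra hne
    exact Set.disjoint_left.1 (P.blocks_disjoint j j' hne) h h'
  have hpp : ∀ j j' w, w ∈ (P.path j).support → w ∈ (P.path j').support → j = j' :=
    fun j j' w h h' => by
      by_contra hne
      exact P.paths_disjoint j j' hne w h h'
  have hlp := P.last_path_inter
  have same : ∀ w, w ∈ P.block i → (w ∈ (P.path i).support ∨ w ∈ P.lastBlock) → w = P.y i := by
    rintro w hw (h | h)
    · rcases hbp i i w hw h with ⟨-, h⟩ | ⟨h, -⟩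
      · exact h
      · omega
    · exact absurd h (hd _ _ hw)
  rcases hst with rfl | hst
  · exact .inl (same s hs ht)
  have hs' : s ∈ P.support := .inl (.inl (Set.mem_iUnion.2 ⟨i, hs⟩))
  have ht' : t ∈ P.support := by
    rcases ht with h | h
    · exact .inr (Set.mem_iUnion.2 ⟨i, h⟩)
    · exact .inl (.inr h)
  rcases P.edges_within s t hs' ht' hst with ⟨j, h1, h2⟩ | ⟨h1, h2⟩ | ⟨j, h1, h2⟩
  · obtain rfl := hbb _ _ _ hs h1
    exact .inr (same t h2 ht)
  · exact absurd h1 (hd _ _ hs)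
  · rcases hbp i j s hs h1 with ⟨rfl, h⟩ | ⟨h, -⟩
    · exact .inl h
    · exfalso
      rcases ht with ht | ht
      · obtain rfl := hpp _ _ _ ht h2
        omega
      · have := (hlp j t ht h2).1
        omega

/-- Where the part of the PCP before the last regular block meets, or sends an edge to, the rest of
the PCP, one of the two vertices is `x`. -/
lemma PCP.before_rest {V : Type} {G : SimpleGraph V} {ℓ : ℕ} (P : PCP G ℓ) (i : Fin ℓ)
    (hi : i.val + 1 = ℓ) {s t : V} (hs : s ∈ P.before i.castSucc)
    (ht : t ∈ P.block i ∨ t ∈ (P.path i).support ∨ t ∈ P.lastBlock) (hst : s = t ∨ G.Adj s t) :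
    s = P.x i.castSucc ∨ t = P.x i.castSucc := by
  rcases hs with rfl | ⟨m, hm, hs⟩
  · exact .inl rfl
  have hm' : m.val < i.val := by simpa using hm
  have hd : ∀ j w, w ∈ P.block j → w ∉ P.lastBlock := fun j w h h' =>
    Set.disjoint_left.1 (P.block_last_disjoint j) h h'
  have hbp := P.block_path_inter
  have hbb : ∀ j j' w, w ∈ P.block j → w ∈ P.block j' → j = j' := fun j j' w h h' => by
    by_contra hne
    exact Set.disjoint_left.1 (P.blocks_disjoint j j' hne) h h'
  have hpp : ∀ j j' w, w ∈ (P.path j).support → w ∈ (P.path j').support → j = j' :=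
    fun j j' w h h' => by
      by_contra hne
      exact P.paths_disjoint j j' hne w h h'
  have hlp := P.last_path_inter
  have sameB : ∀ j w, j.val < i.val → w ∈ P.block j →
      (w ∈ P.block i ∨ w ∈ (P.path i).support ∨ w ∈ P.lastBlock) → False := by
    rintro j w hj hw (h | h | h)
    · obtain rfl := hbb _ _ _ hw h
      omega
    · rcases hbp j i w hw h with ⟨rfl, -⟩ | ⟨h, -⟩ <;> omega
    · exact hd _ _ hw h
  have sameP : ∀ j w, j.val < i.val → w ∈ (P.path j).support →
      (w ∈ P.block i ∨ w ∈ (P.path i).support ∨ w ∈ P.lastBlock) →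
      j.val + 1 = i.val ∧ w = P.x i.castSucc := by
    rintro j w hj hw (h | h | h)
    · rcases hbp i j w h hw with ⟨rfl, -⟩ | h
      · omega
      · exact h
    · obtain rfl := hpp _ _ _ hw h
      omega
    · have := (hlp j w h hw).1
      omega
  rcases hst with rfl | hst
  · rcases hs with hs | hs
    · exact (sameB m s hm' hs ht).elim
    · exact .inl (sameP m s hm' hs ht).2
  have hs' : s ∈ P.support := by
    rcases hs with h | h
    · exact .inl (.inl (Set.mem_iUnion.2 ⟨m, h⟩))
    · exact .inr (Set.mem_iUnion.2 ⟨m, h⟩)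
  have ht' : t ∈ P.support := by
    rcases ht with h | h | h
    · exact .inl (.inl (Set.mem_iUnion.2 ⟨i, h⟩))
    · exact .inr (Set.mem_iUnion.2 ⟨i, h⟩)
    · exact .inl (.inr h)
  rcases P.edges_within s t hs' ht' hst with ⟨j, h1, h2⟩ | ⟨h1, h2⟩ | ⟨j, h1, h2⟩
  · rcases hs with hs | hs
    · obtain rfl := hbb _ _ _ hs h1
      exact (sameB m t hm' h2 ht).elim
    · rcases hbp j m s h1 hs with ⟨rfl, -⟩ | ⟨h, h'⟩
      · exact (sameB _ t hm' h2 ht).elim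
      · by_cases hji : j = i
        · exact .inl (hji ▸ h')
        · exact (sameB j t (by have := Fin.val_ne_of_ne hji; omega) h2 ht).elim
  · rcases hs with hs | hs
    · exact absurd h1 (hd _ _ hs)
    · have := (hlp m s h1 hs).1
      omega
  · have hj : j.val < i.val := by
      rcases hs with hs | hs
      · rcases hbp m j s hs h1 with ⟨rfl, -⟩ | ⟨h, -⟩ <;> omega
      · obtain rfl := hpp _ _ _ hs h1
        exact hm'
    exact .inr (sameP j t hj h2 ht).2

/-! ### The active lift dominates the last block -/

/-- Every neighbour, one level up, of a vertex of the last block has a neighbour in the last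
regular block. Otherwise that neighbour `u` closes an induced cycle through the last regular block,
whose parity is chosen by the choice of the path inside the block. -/
lemma PCP.exists_adj_block {V : Type} {G : SimpleGraph V}
    (heven : ∀ n : ℕ, 6 ≤ n → Even n → NoInducedCycle G n)
    {v : V} {k ℓ : ℕ} (hk : 2 ≤ k) (P : PCP G ℓ) (hroot : P.IsRootedInLevel v k)
    (i : Fin ℓ) (hi : i.val + 1 = ℓ) {u w : V} (hu : u ∈ level G v (k - 1))
    (hw : w ∈ P.lastBlock) (huw : G.Adj u w) : ∃ b ∈ P.block i, G.Adj b u := by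
  by_contra hno
  push Not at hno
  obtain ⟨hlev, r, hr, hrx, hronly⟩ := hroot
  have h0mem : P.x 0 ∈ P.block ⟨0, by omega⟩ := P.x_mem ⟨0, by omega⟩
  have hur : u ≠ r := by
    rintro rfl
    refine hronly w (.inl (.inr hw)) ?_ huw
    rintro rfl
    exact Set.disjoint_left.1 (P.block_last_disjoint _) h0mem hw
  have hbsupp : P.before i.castSucc ⊆ P.support := by
    rintro z (rfl | ⟨j, -, h | h⟩)
    · exact .inl (.inl (Set.mem_iUnion.2 ⟨i, P.x_mem i⟩))
    · exact .inl (.inl (Set.mem_iUnion.2 ⟨j, h⟩))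
    · exact .inr (Set.mem_iUnion.2 ⟨j, h⟩)
  -- The induced path from `y` to a neighbour of `u`, inside the last path and the last block.
  let Y : Set V := {z | z ∈ (P.path i).support ∨ z ∈ P.lastBlock}
  have hxlast : P.x i.succ ∈ P.lastBlock := by
    have : i.succ = Fin.last ℓ := Fin.ext (by simpa using hi)
    rw [this]; exact P.xlast_mem
  have hYw : WalkIn G Y (P.y i) w :=
    WalkIn.trans ⟨P.path i, fun z hz => .inl hz⟩
      ((WalkIn.of_connected P.last_connected hxlast hw).mono fun z hz => .inr hz)
  obtain ⟨d, R, hR, hRY, hud, hRu⟩ := exists_induced_path_to_nbr hYw huw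
  -- The induced path from `x` to a neighbour of `u`, inside the earlier part of the PCP, the root
  -- and the levels above.
  let X : Set V := P.before i.castSucc ∪ {z | z = r ∨ G.dist v z ≤ k - 2}
  obtain ⟨c, hc, hcu⟩ := exists_adj_level_pred (by omega) hu
  obtain ⟨c', hc', hcr⟩ := exists_adj_level_pred (by omega) hr
  have hk2 : k - 1 - 1 = k - 2 := by omega
  rw [hk2] at hc hc'
  have hXc : WalkIn G X (P.x i.castSucc) c := by
    have hlow : {z | G.dist v z ≤ k - 2} ⊆ X := fun z hz => .inr (.inr hz)
    have hrX : r ∈ X := .inr (.inl rfl)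
    have h1 : WalkIn G X (P.x i.castSucc) (P.x 0) :=
      (P.walkIn_before i.castSucc).symm.mono fun z hz => .inl hz
    have h0X : P.x 0 ∈ X := by
      obtain ⟨p, hp⟩ := h1
      exact hp _ p.end_mem_support
    have h2 : WalkIn G X (P.x 0) r := WalkIn.of_adj hrx.symm h0X hrX
    have h3 : WalkIn G X r c' := WalkIn.of_adj hcr.symm hrX (hlow hc'.2.le)
    exact ((h1.trans h2).trans h3).trans
      (((walkIn_level_le hc').symm.trans (walkIn_level_le hc)).mono hlow)
  obtain ⟨e, L, hL, hLX, hue, hLu⟩ := exists_induced_path_to_nbr hXc hcu.symm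
  -- Between them, a path in the last regular block making the final cycle even.
  obtain ⟨M, hM, hMB, hMpar⟩ : ∃ M : G.Walk (P.x i.castSucc) (P.y i), IsInducedPathW M ∧
      (∀ z ∈ M.support, z ∈ P.block i) ∧ Even (L.length + M.length + R.length) := by
    obtain ⟨M₁, h1, h1', h1''⟩ := P.odd_path i
    obtain ⟨M₂, h2, h2', h2''⟩ := P.even_path i
    rcases Nat.even_or_odd (L.length + R.length) with h | h
    · exact ⟨M₂, h2, h2', by grind⟩
    · exact ⟨M₁, h1, h1', by grind⟩
  have hMR : IsInducedPathW (M.append R) := hM.append hR fun s hs t ht hst =>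
    P.block_after i hi (hMB s hs) (hRY t ht) hst
  have hrest : ∀ t, t ∈ (M.append R).support →
      t ∈ P.block i ∨ t ∈ (P.path i).support ∨ t ∈ P.lastBlock := by
    intro t ht
    rcases (Walk.mem_support_append_iff _ _).1 ht with ht | ht
    · exact .inl (hMB t ht)
    · exact .inr (hRY t ht)
  have hrestS : ∀ t, t ∈ (M.append R).support → t ∈ P.support := by
    intro t ht
    rcases hrest t ht with h | h | h
    · exact .inl (.inl (Set.mem_iUnion.2 ⟨i, h⟩))
    · exact .inr (Set.mem_iUnion.2 ⟨i, h⟩)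
    · exact .inl (.inr h)
  have hfull : IsInducedPathW (L.reverse.append (M.append R)) := by
    refine hL.reverse.append hMR fun s hs t ht hst => ?_
    have htk := (hlev (hrestS t ht)).2
    rcases hLX s (by simpa using hs) with hs | rfl | hs
    · exact P.before_rest i hi hs (hrest t ht) hst
    · rcases hst with rfl | hst
      · have := hr.2
        omega
      · have ht0 : t = P.x 0 := by
          by_contra h
          exact hronly t (hrestS t ht) h hst
        subst ht0
        exact P.before_rest i hi (s := P.x 0) (by
          obtain ⟨p, hp⟩ := P.walkIn_before i.castSucc
          exact hp _ p.start_mem_support) (hrest _ ht) (.inl rfl) |>.elim .inr .inr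
    · change G.dist v s ≤ k - 2 at hs
      rcases hst with rfl | hst
      · omega
      · have := level_dist_le_of_adj (hlev (hrestS t ht)) hst
        omega
  have huS : u ∉ P.support := fun h => by
    have h1 := (hlev h).2
    have h2 := hu.2
    omega
  have hunot : u ∉ (L.reverse.append (M.append R)).support := by
    intro h
    rcases (Walk.mem_support_append_iff _ _).1 h with h | h
    · rcases hLX u (by simpa using h) with h | h | h
      · exact huS (hbsupp h)
      · exact hur h
      · change G.dist v u ≤ k - 2 at h
        have := hu.2
        omega
    · exact huS (hrestS u h)
  have hends : ∀ z ∈ (L.reverse.append (M.append R)).support, G.Adj u z → z = e ∨ z = d := by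
    intro z hz huz
    rcases (Walk.mem_support_append_iff _ _).1 hz with hz | hz
    · exact .inl (hLu z (by simpa using hz) huz)
    rcases (Walk.mem_support_append_iff _ _).1 hz with hz | hz
    · exact absurd huz.symm (hno z (hMB z hz))
    · exact .inr (hRu z hz huz)
  have hlenL : 1 ≤ L.length := by
    by_contra h
    have := Walk.eq_of_length_eq_zero (p := L) (by omega)
    exact hno _ (P.x_mem i) (this ▸ hue.symm)
  have hlenR : 1 ≤ R.length := by
    by_contra h
    have := Walk.eq_of_length_eq_zero (p := R) (by omega)
    exact hno _ (P.y_mem i) (this ▸ hud.symm)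
  have hlenM : 1 ≤ M.length := by
    by_contra h
    have hxy := Walk.eq_of_length_eq_zero (p := M) (by omega)
    -- If `x = y`, then no path between them has odd length.
    obtain ⟨q, hq, -, hodd⟩ := P.odd_path i
    have := hq.1.getVert_injOn (x₁ := 0) (x₂ := q.length) (Nat.zero_le _) (le_refl q.length)
      (by rw [Walk.getVert_zero, Walk.getVert_length, hxy])
    rw [← this] at hodd
    simp at hodd
  have hlen : (L.reverse.append (M.append R)).length = L.length + M.length + R.length := by
    rw [Walk.length_append, Walk.length_append, Walk.length_reverse, add_assoc]
  refine hfull.cycle (by omega) hunot hue hud hends (heven _ ?_ ?_)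
  · rw [hlen]
    obtain ⟨m, hm⟩ := hMpar
    omega
  · rw [hlen]
    exact hMpar.add even_two

/-- Let `G ∈ C_{3,2k≥6}` and `P` a rooted PCP of order `ℓ` in a level
`N_k` (`k ≥ 2`) with leftovers at least `δ`; let `A = N(G_ℓ) ∩ N_{k-1}` be the active
lift. If every stable set `S ⊆ A` satisfies `χ(N(S) ∩ N_k) ≤ γ`, then `χ(A) ≥ δ/γ`. -/
theorem active_lift_large (V : Type) [Fintype V] (G : SimpleGraph V)
    (h3 : G.CliqueFree 3)
    (heven : ∀ n : ℕ, 6 ≤ n → Even n → NoInducedCycle G n)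
    (v : V) (k ℓ : ℕ) (hk : 2 ≤ k) (hℓ : 0 < ℓ)
    (P : PCP G ℓ) (hroot : P.IsRootedInLevel v k)
    (δ γ : ℝ) (hγ : 0 < γ) (hδ : δ ≤ (P.leftovers : ℝ))
    (A : Set V)
    (hA : A = neighborsOf G (P.block ⟨ℓ - 1, by omega⟩) ∩ level G v (k - 1))
    (hstab : ∀ S ⊆ A, (S.Pairwise fun a b => ¬ G.Adj a b) →
      (chiSet G (neighborsOf G S ∩ level G v k) : ℝ) ≤ γ) :
    δ / γ ≤ (chiSet G A : ℝ) := by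
  have hHL : P.lastBlock ⊆ level G v k := fun w hw => hroot.1 (.inl (.inr hw))
  have hdom : ∀ w ∈ P.lastBlock, ∃ a ∈ A, G.Adj a w := by
    intro w hw
    obtain ⟨u, hu, huw⟩ := exists_adj_level_pred (by omega) (hHL hw)
    obtain ⟨b, hb, hbu⟩ := P.exists_adj_block heven hk hroot ⟨ℓ - 1, by omega⟩
      (Nat.sub_add_cancel hℓ) hu hw huw
    exact ⟨u, hA ▸ ⟨⟨b, hb, hbu⟩, hu⟩, huw⟩
  rw [div_le_iff₀ hγ]
  exact hδ.trans (chiSet_le_mul hγ hHL hdom hstab)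
end

section
/- Suppose c' is a positive integer such that every graph containing no triangle, no induced cycle of length 5, and no induced cycle of even length at least 6 has chromatic number less than c'. Let G be a connected graph containing no triangle and no induced cycle of even length at least 6, and let v be any vertex of G. For every integer δ such that χ(G) ≥ δ ≥ 2c', there exists a strong PCP of order 1 in G with origin v and leftovers at least δ/2 − 15. -/
/-!
Half of the colours of `G` already live on a component `D` of one distance class from `v`
(`colorable_of_levels`, `exists_comp`), and `D` contains an induced `5`-cycle `C` because its
chromatic number is at least `c'`.

*Parity change.* Let `Nₙ` be the class just below `D`. The traces on `Nₙ` of the neighbourhoods of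
two cycle vertices at distance two cannot be comparable all the way round the odd cycle
(`exists_incomparable`), so there are `p, q ∈ Nₙ`, each seeing exactly one of two such vertices.
Take two geodesics from `v` that separate as late as possible and end at `p` and `q`, or are joined
by an edge at some height `j`. Minimality forbids all other edges between them
(`exists_min_pair`). If they never meet in an edge, they close up through three vertices of `C`
into an even hole (`hole_of_pair`). Hence there are geodesics `X`, `Y` with the edge `X j — Y j`:
crossing it, or not, changes the parity of the route from `v` to `X n`.

*Leaving the gadget.* Delete from `D` the neighbourhoods of the two top vertices `X n`, `Y j` and
of `C` (seven colours) and let `K` be a component of what remains. A shortest path `S` in `D` from a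
neighbour of the gadget to a vertex with a neighbour in `K` (`exists_link`) prolongs both routes to
induced paths (`Gadget.indSeq_route`, `Gadget.indSeq_route2`). Two more colours buy a path
`S l, w₁, w₂` into a connected part `H` of `K` that avoids the neighbourhoods of `S l` and `w₁`
(`exists_tail`); `H` is the last block. For `δ ≤ 30` the required bound is nonpositive, so `H` may
be a single vertex, and `C` is then chosen afterwards, away from `w₁` and `w₂`.

*Four colours for the block.* The vertices of the two routes induce a graph with one cycle. A vertex
sees at most two vertices of `C`, at distance two on `C`, so a `3`-colouring of `C` forbids at most
two of the four colours at each vertex. Rotating that colouring so that `Y j` sees one colour only,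
a greedy colouring along the first route and then along the ear `Y` succeeds (`setCol_block`).
-/

open SimpleGraph

/-! ### Colourings and components of vertex sets -/

/-- `SetCol G A t`: the subgraph induced by `A` is `t`-colourable, witnessed by a map defined on
all of `V` whose values outside `A` are irrelevant. -/
def SetCol {V : Type} (G : SimpleGraph V) (A : Set V) (t : ℕ) : Prop :=
  ∃ c : V → ℕ, (∀ x ∈ A, c x < t) ∧ ∀ x ∈ A, ∀ y ∈ A, G.Adj x y → c x ≠ c y

lemma setCol_iff {V : Type} (G : SimpleGraph V) (A : Set V) (t : ℕ) :
    (G.induce A).Colorable t ↔ SetCol G A t := by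
  classical
  constructor
  · rintro ⟨C⟩
    refine ⟨fun x => if h : x ∈ A then (C ⟨x, h⟩ : ℕ) else 0, ?_, ?_⟩
    · intro x hx
      simp [hx]
    · intro x hx y hy hxy
      have := C.valid (v := ⟨x, hx⟩) (w := ⟨y, hy⟩) (by simpa using hxy)
      simp only [hx, hy, dif_pos]
      intro h
      exact this (Fin.ext h)
  · rintro ⟨c, h1, h2⟩
    refine ⟨Coloring.mk (fun x => (⟨c x.1, h1 x.1 x.2⟩ : Fin t)) ?_⟩
    intro x y hxy h
    exact h2 x.1 x.2 y.1 y.2 (by simpa using hxy) (by simpa using h)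

lemma no_tri {V : Type} {G : SimpleGraph V} (h3 : G.CliqueFree 3) {a b c : V}
    (h1 : G.Adj a b) (h2 : G.Adj b c) (hac : G.Adj a c) : False := by
  classical
  exact h3 {a, b, c} (is3Clique_triple_iff.2 ⟨h1, hac, h2⟩)

lemma SetCol.mono {V : Type} {G : SimpleGraph V} {A B : Set V} {s t : ℕ} (hAB : A ⊆ B)
    (hst : s ≤ t) (h : SetCol G B s) : SetCol G A t := by
  obtain ⟨c, h1, h2⟩ := h
  exact ⟨c, fun x hx => (h1 x (hAB hx)).trans_le hst,
    fun x hx y hy => h2 x (hAB hx) y (hAB hy)⟩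

/-- In a triangle-free graph a neighbourhood is independent, so it costs at most one colour. -/
lemma SetCol.of_diff {V : Type} {G : SimpleGraph V} (h3 : G.CliqueFree 3) {A : Set V} {t : ℕ}
    (u : V) (h : SetCol G (A \ {x | G.Adj u x}) t) : SetCol G A (t + 1) := by
  classical
  obtain ⟨c, h1, h2⟩ := h
  refine ⟨fun x => if G.Adj u x then t else c x, ?_, ?_⟩
  · intro x hx
    by_cases hu : G.Adj u x
    · simp [hu]
    · have := h1 x ⟨hx, hu⟩
      simp only [hu, if_false]; omega
  · intro x hx y hy hxy
    by_cases hux : G.Adj u x <;> by_cases huy : G.Adj u y <;> simp only [hux, huy, if_true, if_false]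
    · exact (no_tri h3 hux hxy huy).elim
    · have := h1 y ⟨hy, huy⟩; omega
    · have := h1 x ⟨hx, hux⟩; omega
    · exact h2 x ⟨hx, hux⟩ y ⟨hy, huy⟩ hxy

/-- Removing the five neighbourhoods of a `5`-tuple of vertices costs at most five colours. -/
lemma SetCol.of_diff5 {V : Type} {G : SimpleGraph V} (h3 : G.CliqueFree 3) {A : Set V} {t : ℕ}
    (f : Fin 5 → V) (h : SetCol G (A \ {x | ∃ i, G.Adj (f i) x}) t) : SetCol G A (t + 5) := by
  have e : A \ {x | ∃ i, G.Adj (f i) x} = ((((A \ {x | G.Adj (f 0) x}) \ {x | G.Adj (f 1) x}) \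
      {x | G.Adj (f 2) x}) \ {x | G.Adj (f 3) x}) \ {x | G.Adj (f 4) x} := by
    ext x
    simp [Fin.exists_fin_succ, and_assoc]
  rw [e] at h
  exact ((((h.of_diff h3).of_diff h3).of_diff h3).of_diff h3).of_diff h3

/-- A set that is not `t`-colourable has a connected component that is not `t`-colourable. -/
lemma exists_comp {V : Type} {G : SimpleGraph V} {A : Set V} {t : ℕ} (h : ¬ SetCol G A t) :
    ∃ K ⊆ A, (G.induce K).Connected ∧ ¬ SetCol G K t ∧
      ∀ a ∈ A, a ∉ K → ∀ b ∈ K, ¬ G.Adj a b := by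
  rw [← setCol_iff, colorable_iff_forall_connectedComponent] at h
  push Not at h
  obtain ⟨c, hc⟩ := h
  let e : c.toSimpleGraph ≃g G.induce (Subtype.val '' c.supp) :=
    { toFun := fun x => ⟨x.1.1, x.1, x.2, rfl⟩
      invFun := fun y => ⟨⟨y.1, by obtain ⟨x, -, h⟩ := y.2; rw [← h]; exact x.2⟩, by
        obtain ⟨x, hx, h⟩ := y.2
        have : (⟨y.1, by rw [← h]; exact x.2⟩ : A) = x := Subtype.ext h.symm
        rw [this]; exact hx⟩
      left_inv := fun x => by ext; rfl
      right_inv := fun x => by ext; rfl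
      map_rel_iff' := by
        intro a b
        simp [ConnectedComponent.toSimpleGraph] }
  refine ⟨Subtype.val '' c.supp, ?_, ?_, ?_, ?_⟩
  · rintro _ ⟨x, -, rfl⟩; exact x.2
  · exact e.connected_iff.1 c.connected_toSimpleGraph
  · rw [← setCol_iff]
    intro hcol
    exact hc (Colorable.of_hom e.toHom hcol)
  · rintro a ha hac _ ⟨b, hb, rfl⟩ hadj
    apply hac
    refine ⟨⟨a, ha⟩, ?_, rfl⟩
    have : (G.induce A).Adj ⟨a, ha⟩ b := by simpa using hadj
    exact (c.mem_supp_congr_adj this).2 hb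

/-- A connected set `K₀` sends an edge across any proper nonempty part `K`. -/
lemma exists_bdry {V : Type} {G : SimpleGraph V} {K₀ K : Set V} (hc : (G.induce K₀).Connected)
    {x y : V} (hx : x ∈ K₀) (hxK : x ∉ K) (hy : y ∈ K₀) (hyK : y ∈ K) :
    ∃ a ∈ K₀, a ∉ K ∧ ∃ b ∈ K₀, b ∈ K ∧ G.Adj a b := by
  obtain ⟨w⟩ := hc.preconnected ⟨y, hy⟩ ⟨x, hx⟩
  obtain ⟨d, -, h1, h2⟩ := w.exists_boundary_dart (Subtype.val ⁻¹' K) hyK hxK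
  exact ⟨d.snd.1, d.snd.2, h2, d.fst.1, d.fst.2, h1, by simpa using d.adj.symm⟩

lemma nonempty_of_not_setCol {V : Type} {G : SimpleGraph V} {A : Set V} {t : ℕ}
    (h : ¬ SetCol G A t) : A.Nonempty := by
  by_contra hA
  rw [Set.not_nonempty_iff_eq_empty] at hA
  subst hA
  exact h ⟨fun _ => 0, by simp, by simp⟩

lemma exists_adj_of_not_setCol_one {V : Type} {G : SimpleGraph V} {A : Set V}
    (h : ¬ SetCol G A 1) : ∃ x ∈ A, ∃ y ∈ A, G.Adj x y := by
  by_contra hA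
  push Not at hA
  exact h ⟨fun _ => 0, by simp, fun x hx y hy hxy => (hA x hx y hy hxy).elim⟩

/-- Colouring the even and the odd levels with disjoint palettes: if every distance class from
`v` is `t`-colourable then `G` is `2t`-colourable. -/
lemma colorable_of_levels {V : Type} {G : SimpleGraph V} (v : V) (hconn : G.Connected) (t : ℕ)
    (h : ∀ k, SetCol G (level G v k) t) : SetCol G Set.univ (2 * t) := by
  choose c h1 h2 using h
  have hm : ∀ x, x ∈ level G v (G.dist v x) := fun x => ⟨hconn v x, rfl⟩
  refine ⟨fun x => 2 * c (G.dist v x) x + G.dist v x % 2, ?_, ?_⟩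
  · intro x _
    have := h1 _ x (hm x)
    dsimp only
    omega
  · intro x _ y _ hxy heq
    dsimp only at heq
    have hd := hxy.diff_dist_adj (u := v)
    have hxy' : G.dist v x = G.dist v y := by omega
    have := h2 _ x (hm x) y (by rw [hxy']; exact hm y) hxy
    rw [← hxy'] at heq
    omega

/-- A set that is not colourable with fewer than `c'` colours contains an induced `C₅`. -/
lemma exists_C5 (c' : ℕ) (hc' : 0 < c')
    (hC : ∀ (W : Type) [Fintype W] (H : SimpleGraph W),
      H.CliqueFree 3 → NoInducedCycle H 5 →
      (∀ n : ℕ, 6 ≤ n → Even n → NoInducedCycle H n) → chi H < c')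
    {V : Type} [Fintype V] {G : SimpleGraph V} (h3 : G.CliqueFree 3)
    (heven : ∀ n : ℕ, 6 ≤ n → Even n → NoInducedCycle G n)
    {A : Set V} (hA : ¬ SetCol G A (c' - 1)) : ∃ f : cycleGraph 5 ↪g G, ∀ i, f i ∈ A := by
  classical
  by_contra hno
  push Not at hno
  have := hC A (G.induce A) (h3.comap ⟨(Embedding.induce A).toCopy⟩) ⟨fun f => by
      obtain ⟨i, hi⟩ := hno ((Embedding.induce A).comp f)
      exact hi (f i).2⟩
    (fun n hn he => ⟨fun f => (heven n hn he).false ((Embedding.induce A).comp f)⟩)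
  apply hA
  rw [← setCol_iff]
  have hcol : (G.induce A).Colorable (G.induce A).chromaticNumber.toNat := by
    exact colorable_chromaticNumber (colorable_of_fintype _)
  exact hcol.mono (by unfold chi at this; omega)

/-- The `7`-cycle shows that the constant bounding the class is at least `4`. -/
lemma four_le_of_bound (c' : ℕ)
    (hC : ∀ (W : Type) [Fintype W] (H : SimpleGraph W),
      H.CliqueFree 3 → NoInducedCycle H 5 →
      (∀ n : ℕ, 6 ≤ n → Even n → NoInducedCycle H n) → chi H < c') : 4 ≤ c' := by
  -- An induced cycle of `C₇` is closed under passing to neighbours, so it is all of `C₇`.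
  have key : ∀ n, 5 ≤ n → n ≠ 7 → NoInducedCycle (cycleGraph 7) n := by
    intro n hn hn7
    refine ⟨fun f => ?_⟩
    obtain ⟨m, rfl⟩ : ∃ m, n = m + 2 := ⟨n - 2, by omega⟩
    have hstep : ∀ i : Fin (m + 2), ∃ i', f i' = f i + 1 := by
      intro i
      have ha : (cycleGraph 7).Adj (f i) (f (i + 1)) := by
        rw [f.map_adj_iff, cycleGraph_adj]; right; simp
      have hb : (cycleGraph 7).Adj (f i) (f (i - 1)) := by
        rw [f.map_adj_iff, cycleGraph_adj]; left; simp
      have hne : f (i + 1) ≠ f (i - 1) := by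
        intro h
        have := f.injective h
        have h2 : (1 : Fin (m + 2)) + 1 = 0 := by
          have e : i + (1 + 1) = i := by rw [← add_assoc, this, sub_add_cancel]
          exact left_eq_add.1 e.symm
        have h3 := congrArg Fin.val h2
        rw [Fin.val_add, Fin.val_one, Nat.mod_eq_of_lt (by omega)] at h3
        simp at h3
      have gen : ∀ a b c : Fin 7, (cycleGraph 7).Adj a b → (cycleGraph 7).Adj a c → b ≠ c →
          b = a + 1 ∨ c = a + 1 := by
        simp only [cycleGraph_adj]
        decide
      rcases gen _ _ _ ha hb hne with h | h
      · exact ⟨_, h⟩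
      · exact ⟨_, h⟩
    have hsurj : Function.Surjective f := by
      have hall : ∀ j : ℕ, ∃ i', f i' = (fun x => x + 1)^[j] (f 0) := by
        intro j
        induction j with
        | zero => exact ⟨0, rfl⟩
        | succ j ih =>
          obtain ⟨i, hi⟩ := ih
          obtain ⟨i', hi'⟩ := hstep i
          exact ⟨i', by rw [hi', hi, Function.iterate_succ_apply']⟩
      have gen : ∀ a y : Fin 7, ∃ j < 7, (fun x : Fin 7 => x + 1)^[j] a = y := by decide
      intro y
      obtain ⟨j, -, hj⟩ := gen (f 0) y
      obtain ⟨i, hi⟩ := hall j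
      exact ⟨i, by rw [hi, hj]⟩
    have := Fintype.card_of_bijective ⟨f.injective, hsurj⟩
    simp at this
    omega
  have hfree : (cycleGraph 7).CliqueFree 3 := by
    intro s hs
    obtain ⟨a, b, c, h1, h2, h3, -⟩ := is3Clique_iff.1 hs
    have gen : ∀ a b c : Fin 7, (cycleGraph 7).Adj a b → (cycleGraph 7).Adj a c →
        ¬ (cycleGraph 7).Adj b c := by
      simp only [cycleGraph_adj]
      decide
    exact gen a b c h1 h2 h3
  have := hC (Fin 7) (cycleGraph 7) hfree (key 5 (by omega) (by omega))
    (fun n hn he => key n (by omega) (by rintro rfl; exact absurd he (by decide)))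
  rw [chi, chromaticNumber_cycleGraph_of_odd 7 (by omega) (by decide)] at this
  have h4 : 3 < c' := by simpa using this
  omega

/-! ### Geodesics from the root -/

/-- `X 0, …, X n` is a geodesic starting at `v` (values of `X` beyond `n` are irrelevant). -/
def Geo {V : Type} (G : SimpleGraph V) (v : V) (X : ℕ → V) (n : ℕ) : Prop :=
  (∀ i ≤ n, G.dist v (X i) = i) ∧ ∀ i < n, G.Adj (X i) (X (i + 1))

section Geodesics

variable {V : Type} {G : SimpleGraph V} {v : V}

lemma dist_cases {x y : V} (h : G.Adj x y) :
    G.dist v y = G.dist v x ∨ G.dist v y = G.dist v x + 1 ∨ G.dist v y + 1 = G.dist v x := by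
  have := h.diff_dist_adj (u := v)
  have := h.symm.diff_dist_adj (u := v)
  omega

lemma Geo.zero (hconn : G.Connected) {X : ℕ → V} {n : ℕ} (h : Geo G v X n) : X 0 = v :=
  (hconn.dist_eq_zero_iff.1 (h.1 0 (Nat.zero_le _))).symm

lemma Geo.ne {X : ℕ → V} {n : ℕ} (h : Geo G v X n) {i k : ℕ} (hi : i ≤ n) (hk : k ≤ n)
    (hik : i ≠ k) : X i ≠ X k := by
  intro e
  have h1 := h.1 i hi
  rw [e, h.1 k hk] at h1
  exact hik h1.symm

lemma Geo.adj_iff {X : ℕ → V} {n : ℕ} (h : Geo G v X n) {i k : ℕ} (hi : i ≤ n) (hk : k ≤ n) :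
    G.Adj (X i) (X k) ↔ k = i + 1 ∨ i = k + 1 := by
  constructor
  · intro ha
    have h1 := h.1 i hi
    have h2 := h.1 k hk
    have := dist_cases (v := v) ha
    rcases eq_or_ne i k with rfl | hne
    · exact (ha.ne rfl).elim
    · omega
  · rintro (rfl | rfl)
    · exact h.2 i (by omega)
    · exact (h.2 k (by omega)).symm

lemma exists_geo (hconn : G.Connected) (n : ℕ) (p : V) (hp : G.dist v p = n) :
    ∃ X, Geo G v X n ∧ X n = p := by
  induction n generalizing p with
  | zero =>
    refine ⟨fun _ => p, ⟨fun i hi => ?_, fun i hi => by omega⟩, rfl⟩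
    rw [hp]; omega
  | succ n ih =>
    obtain ⟨w, hw⟩ := hconn.exists_walk_length_eq_dist p v
    rw [G.dist_comm, hp] at hw
    cases w with
    | nil => simp at hw
    | @cons _ q _ h w =>
      have hq : G.dist v q = n := by
        have h1 := dist_le w
        rw [G.dist_comm] at h1
        have := dist_cases (v := v) h
        simp at hw
        omega
      obtain ⟨X, hX, hXn⟩ := ih q hq
      refine ⟨fun i => if i ≤ n then X i else p, ⟨fun i hi => ?_, fun i hi => ?_⟩, by simp⟩
      · by_cases hin : i ≤ n
        · simp [hin, hX.1]
        · simp only [hin, if_false]; omega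
      · by_cases hin : i < n
        · simpa [hin.le, Nat.succ_le_of_lt hin] using hX.2 i hin
        · obtain rfl : i = n := by omega
          simpa [hXn] using h.symm

/-- Two geodesics joined by an edge from position `a` of the first to position `a + 1` of the
second can be spliced there. -/
lemma Geo.splice {X Y : ℕ → V} {n j a : ℕ} (hX : Geo G v X n) (hY : Geo G v Y j) (han : a ≤ n)
    (h : G.Adj (X a) (Y (a + 1))) : Geo G v (fun i => if i ≤ a then X i else Y i) j := by
  refine ⟨fun i hi => ?_, fun i hi => ?_⟩
  · by_cases hia : i ≤ a
    · simp [hia, hX.1 i (hia.trans han)]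
    · simp [hia, hY.1 i hi]
  · rcases lt_trichotomy i a with hia | rfl | hia
    · simpa [hia.le, Nat.succ_le_of_lt hia] using hX.2 i (by omega)
    · simpa using h
    · simpa [show ¬ i ≤ a by omega, show ¬ i + 1 ≤ a by omega] using hY.2 i hi

/-- Position pairs joined by an edge between the branches `X` and `Y`, which separate after
position `m`, are only the branching edge and possibly the two ends at height `j`. -/
def CrossFree (G : SimpleGraph V) (X Y : ℕ → V) (n j m : ℕ) : Prop :=
  ∀ a ≤ n, ∀ b, m < b → b ≤ j →
    X a ≠ Y b ∧ (G.Adj (X a) (Y b) → (a = m ∧ b = m + 1) ∨ (a = j ∧ b = j))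

/-- For distinct `p`, `q` at the same distance from `v`, a shortest bifurcation gives a geodesic
`X` to `p` and a second geodesic `Y` leaving it at height `m` and ending at height `j`, either
adjacent to `X j` or at `q`, with no unforced edges between the branches. -/
lemma exists_min_pair (hconn : G.Connected) (h3 : G.CliqueFree 3) {n : ℕ} {p q : V}
    (hp : G.dist v p = n) (hq : G.dist v q = n) (hpq : p ≠ q) :
    ∃ X Y j m, Geo G v X n ∧ Geo G v Y j ∧ X n = p ∧ m < j ∧ j ≤ n ∧ (∀ i ≤ m, X i = Y i) ∧
      (G.Adj (X j) (Y j) ∨ (j = n ∧ Y n = q)) ∧ CrossFree G X Y n j m := by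
  classical
  let Conf : (ℕ → V) → (ℕ → V) → ℕ → ℕ → Prop := fun X Y j m =>
    Geo G v X n ∧ Geo G v Y j ∧ X n = p ∧ m < j ∧ j ≤ n ∧ (∀ i ≤ m, X i = Y i) ∧
      (G.Adj (X j) (Y j) ∨ (j = n ∧ Y n = q))
  have hex : ∃ k, ∃ X Y j m, Conf X Y j m ∧ j - m = k := by
    obtain ⟨X, hX, hXn⟩ := exists_geo hconn n p hp
    obtain ⟨Y, hY, hYn⟩ := exists_geo hconn n q hq
    have hn : 0 < n := by
      rcases Nat.eq_zero_or_pos n with rfl | h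
      · rw [hX.zero hconn] at hXn
        rw [hY.zero hconn] at hYn
        exact (hpq (hXn.symm.trans hYn)).elim
      · exact h
    refine ⟨n - 0, X, Y, n, 0, ⟨hX, hY, hXn, hn, le_rfl, ?_, Or.inr ⟨rfl, hYn⟩⟩, rfl⟩
    intro i hi
    obtain rfl : i = 0 := by omega
    rw [hX.zero hconn, hY.zero hconn]
  obtain ⟨X, Y, j, m, ⟨hX, hY, hXn, hmj, hjn, hag, hend⟩, hk⟩ := Nat.find_spec hex
  have hmin : ∀ X' Y' j' m', Conf X' Y' j' m' → j - m ≤ j' - m' := by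
    intro X' Y' j' m' h
    rw [hk]
    exact Nat.find_min' hex ⟨X', Y', j', m', h, rfl⟩
  -- Moving the branching point of `Y` up along `X` contradicts minimality.
  have hupX : ∀ a, m < a → a < j → ¬ G.Adj (X a) (Y (a + 1)) := by
    intro a hma haj hadj
    have := hmin X (fun i => if i ≤ a then X i else Y i) j a
      ⟨hX, hX.splice hY (by omega) hadj, hXn, haj, hjn, fun i hi => by simp [hi], by
        rcases hend with h | ⟨rfl, h⟩
        · left; simpa [show ¬ j ≤ a by omega] using h
        · right; refine ⟨rfl, ?_⟩; simpa [show ¬ j ≤ a by omega] using h⟩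
    omega
  have hupY : ∀ a, m < a → a < j → ¬ G.Adj (Y a) (X (a + 1)) := by
    intro a hma haj hadj
    have := hmin (fun i => if i ≤ a then Y i else X i) Y j a
      ⟨hY.splice hX (by omega) hadj, hY, by simpa [show ¬ n ≤ a by omega] using hXn, haj, hjn,
        fun i hi => by simp [hi], by
        rcases hend with h | ⟨rfl, h⟩
        · left; simpa [show ¬ j ≤ a by omega] using h
        · right; exact ⟨rfl, h⟩⟩
    omega
  refine ⟨X, Y, j, m, hX, hY, hXn, hmj, hjn, hag, hend, ?_⟩
  intro a ha b hmb hbj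
  have hda := hX.1 a ha
  have hdb := hY.1 b hbj
  constructor
  · intro e
    obtain rfl : a = b := by rw [e] at hda; omega
    rcases hbj.lt_or_eq with hlt | rfl
    · apply hupX a hmb hlt
      rw [e]
      exact hY.2 a hlt
    · rcases hend with h | ⟨rfl, h⟩
      · rw [e] at h; exact h.ne rfl
      · rw [e] at hXn; exact hpq (hXn.symm.trans h)
  · intro hadj
    have := dist_cases (v := v) hadj
    have hc : b = a ∨ b = a + 1 ∨ b + 1 = a := by omega
    rcases hc with rfl | rfl | rfl
    · rcases hbj.lt_or_eq with hlt | rfl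
      · have := hmin X Y b m ⟨hX, ⟨fun i hi => hY.1 i (by omega), fun i hi => hY.2 i (by omega)⟩,
          hXn, hmb, ha, hag, Or.inl hadj⟩
        omega
      · exact Or.inr ⟨rfl, rfl⟩
    · rcases (Nat.lt_succ_iff.1 hmb).lt_or_eq with hlt | rfl
      · exact (hupX a hlt (by omega) hadj).elim
      · exact Or.inl ⟨rfl, rfl⟩
    · rcases hbj.lt_or_eq with hlt | rfl
      · exact (hupY b hmb hlt hadj.symm).elim
      · rcases hend with h | ⟨rfl, h⟩
        · exact (no_tri h3 h hadj.symm (hX.2 b (by omega))).elim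
        · omega

/-- A sequence whose only adjacencies are between cyclically consecutive terms is an induced
cycle. -/
lemma cycle_of_seq (h : ℕ → V) (N : ℕ)
    (hh : ∀ a b, a < b → b < N →
      h a ≠ h b ∧ (G.Adj (h a) (h b) ↔ b = a + 1 ∨ (a = 0 ∧ b + 1 = N))) :
    Nonempty (cycleGraph N ↪g G) := by
  have hne : ∀ a b : Fin N, h a = h b → a = b := by
    intro a b hab
    rcases lt_trichotomy a.1 b.1 with hlt | heq | hlt
    · exact ((hh _ _ hlt b.2).1 hab).elim
    · exact Fin.ext heq
    · exact ((hh _ _ hlt a.2).1 hab.symm).elim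
  have hval : ∀ a b : Fin N, a.1 < b.1 → (b - a).val = b.1 - a.1 ∧ (a - b).val = N + a.1 - b.1 := by
    intro a b hab
    have := b.2
    constructor
    · rw [Fin.sub_val_of_le (by exact hab.le)]
    · rw [Fin.coe_sub_iff_lt.2 hab]
  have hadj : ∀ a b : Fin N, a.1 < b.1 → (G.Adj (h a) (h b) ↔ (cycleGraph N).Adj a b) := by
    intro a b hab
    rw [(hh _ _ hab b.2).2, cycleGraph_adj', (hval a b hab).1, (hval a b hab).2]
    have := b.2
    omega
  refine ⟨⟨⟨fun i => h i, fun a b hab => hne a b hab⟩, ?_⟩⟩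
  intro a b
  change G.Adj (h a) (h b) ↔ _
  rcases lt_trichotomy a.1 b.1 with hlt | heq | hlt
  · exact hadj a b hlt
  · obtain rfl := Fin.ext heq
    simp
  · rw [G.adj_comm, hadj b a hlt, SimpleGraph.adj_comm]

/-- If the two branches end at nonadjacent vertices at height `n`, then closing them up through a
path of length two at height `n + 1` yields an even hole. -/
lemma hole_of_pair (h3 : G.CliqueFree 3)
    (heven : ∀ n : ℕ, 6 ≤ n → Even n → NoInducedCycle G n)
    {X Y : ℕ → V} {n m : ℕ} (hX : Geo G v X n) (hY : Geo G v Y n) (hm : m < n)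
    (hag : ∀ i ≤ m, X i = Y i) (hcf : CrossFree G X Y n n m) (hna : ¬ G.Adj (X n) (Y n))
    {ca cc cb : V} (hda : G.dist v ca = n + 1) (hdc : G.dist v cc = n + 1)
    (hdb : G.dist v cb = n + 1) (h1 : G.Adj ca cc) (h2 : G.Adj cc cb)
    (hpa : G.Adj (X n) ca) (hpb : ¬ G.Adj (X n) cb) (hqb : G.Adj (Y n) cb)
    (hqa : ¬ G.Adj (Y n) ca) : False := by
  obtain ⟨s, rfl⟩ : ∃ s, n = m + s := ⟨n - m, by omega⟩
  let h : ℕ → V := fun t => if t ≤ s then X (m + s - t) else if t ≤ 2 * s then Y (m + t - s)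
    else if t = 2 * s + 1 then cb else if t = 2 * s + 2 then cc else ca
  have e1 : ∀ t, t ≤ s → h t = X (m + s - t) := fun t ht => by simp [h, ht]
  have e2 : ∀ t, s < t → t ≤ 2 * s → h t = Y (m + t - s) := fun t ht ht' => by
    simp [h, show ¬ t ≤ s by omega, ht']
  have e3 : h (2 * s + 1) = cb := by
    simp [h, show ¬ 2 * s + 1 ≤ s by omega]
  have e4 : h (2 * s + 2) = cc := by
    simp [h, show ¬ 2 * s + 2 ≤ s by omega]
  have e5 : h (2 * s + 3) = ca := by
    simp [h, show ¬ 2 * s + 3 ≤ s by omega]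
  have hcab : ¬ G.Adj cb ca := fun h => no_tri h3 h1 h2 h.symm
  have hpc : ¬ G.Adj (X (m + s)) cc := fun h => no_tri h3 hpa h1 h
  have hqc : ¬ G.Adj (Y (m + s)) cc := fun h => no_tri h3 hqb h2.symm h
  -- A vertex at height `n + 1` is joined to a geodesic at most at its end.
  have top : ∀ (Z : ℕ → V), Geo G v Z (m + s) → ∀ c, G.dist v c = m + s + 1 → ∀ i ≤ m + s,
      Z i ≠ c ∧ (G.Adj (Z i) c → i = m + s) := by
    intro Z hZ c hc i hi
    have hd := hZ.1 i hi
    constructor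
    · rintro rfl; omega
    · intro hadj
      have := dist_cases (v := v) hadj
      omega
  have topc : ∀ c, G.dist v c = m + s + 1 → ∀ t ≤ 2 * s,
      h t ≠ c ∧ (G.Adj (h t) c → t = 0 ∨ t = 2 * s) := by
    intro c hc t ht
    by_cases hts : t ≤ s
    · rw [e1 t hts]
      have := top X hX c hc (m + s - t) (by omega)
      exact ⟨this.1, fun h => by have := this.2 h; omega⟩
    · rw [e2 t (by omega) ht]
      have := top Y hY c hc (m + t - s) (by omega)
      exact ⟨this.1, fun h => by have := this.2 h; omega⟩
  have hz : h 0 = X (m + s) := by rw [e1 0 (by omega)]; simp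
  have hzz : h (2 * s) = Y (m + s) := by
    rw [e2 (2 * s) (by omega) le_rfl]; congr 1; omega
  have main : ∀ a b, a < b → b < 2 * s + 4 →
      h a ≠ h b ∧ (G.Adj (h a) (h b) ↔ b = a + 1 ∨ (a = 0 ∧ b + 1 = 2 * s + 4)) := by
    intro a b hab hb
    by_cases hb2 : b ≤ 2 * s
    · by_cases hbs : b ≤ s
      · rw [e1 a (by omega), e1 b hbs, hX.adj_iff (by omega) (by omega)]
        exact ⟨hX.ne (by omega) (by omega) (by omega), by omega⟩
      · by_cases has : a ≤ s
        · rw [e1 a has, e2 b (by omega) hb2]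
          have hc := hcf (m + s - a) (by omega) (m + b - s) (by omega) (by omega)
          refine ⟨hc.1, fun hadj => ?_, fun hb1 => ?_⟩
          · rcases hc.2 hadj with h | h
            · omega
            · rw [h.1, h.2] at hadj; exact (hna hadj).elim
          · obtain rfl : a = s := by omega
            obtain rfl : b = a + 1 := by omega
            have := hY.2 m (by omega)
            rw [← hag m le_rfl] at this
            convert this using 2 <;> omega
        · rw [e2 a (by omega) (by omega), e2 b (by omega) hb2, hY.adj_iff (by omega) (by omega)]
          exact ⟨hY.ne (by omega) (by omega) (by omega), by omega⟩
    · have hb3 : b = 2 * s + 1 ∨ b = 2 * s + 2 ∨ b = 2 * s + 3 := by omega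
      rcases hb3 with rfl | rfl | rfl
      · rw [e3]
        have := topc cb hdb a (by omega)
        refine ⟨this.1, fun hadj => ?_, fun hh => ?_⟩
        · rcases this.2 hadj with rfl | rfl
          · rw [hz] at hadj; exact (hpb hadj).elim
          · omega
        · obtain rfl : a = 2 * s := by omega
          rw [hzz]; exact hqb
      · rw [e4]
        rcases (show a ≤ 2 * s ∨ a = 2 * s + 1 by omega) with ha | rfl
        · have := topc cc hdc a ha
          refine ⟨this.1, fun hadj => ?_, fun hh => by omega⟩
          rcases this.2 hadj with rfl | rfl
          · rw [hz] at hadj; exact (hpc hadj).elim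
          · rw [hzz] at hadj; exact (hqc hadj).elim
        · rw [e3]
          exact ⟨h2.ne', fun _ => by omega, fun _ => h2.symm⟩
      · rw [e5]
        rcases (show a ≤ 2 * s ∨ a = 2 * s + 1 ∨ a = 2 * s + 2 by omega) with ha | rfl | rfl
        · have := topc ca hda a ha
          refine ⟨this.1, fun hadj => ?_, fun hh => ?_⟩
          · rcases this.2 hadj with rfl | rfl
            · omega
            · rw [hzz] at hadj; exact (hqa hadj).elim
          · obtain rfl : a = 0 := by omega
            rw [hz]; exact hpa
        · rw [e3]
          refine ⟨?_, fun hadj => (hcab hadj).elim, fun hh => by omega⟩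
          rintro rfl; exact hpb hpa
        · rw [e4]
          exact ⟨h1.ne', fun _ => by omega, fun _ => h1.symm⟩
  obtain ⟨f⟩ := cycle_of_seq h (2 * s + 4) main
  exact (heven (2 * s + 4) (by omega) ⟨s + 2, by omega⟩).false f

/-- Going round a `5`-cycle above height `n`, the traces `N(cᵢ) ∩ Nₙ` and `N(cᵢ₊₂) ∩ Nₙ` cannot
always be comparable: consecutive traces are disjoint and nonempty, so the inclusions would have
to alternate along the odd cycle `c₀ c₂ c₄ c₁ c₃`. -/
lemma exists_incomparable {P : V → Prop} (R : Fin 5 → V → Prop)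
    (hne : ∀ i, ∃ x, P x ∧ R i x) (hdis : ∀ i x, P x → R i x → ¬ R (i + 1) x) :
    ∃ a p q, P p ∧ P q ∧ R a p ∧ ¬ R (a + 2) p ∧ R (a + 2) q ∧ ¬ R a q := by
  by_contra hno
  push Not at hno
  have hcomp : ∀ i, (∀ x, P x → R i x → R (i + 2) x) ∨ (∀ x, P x → R (i + 2) x → R i x) := by
    intro i
    by_contra hc
    push Not at hc
    obtain ⟨⟨p, hp, h1, h2⟩, q, hq, h3, h4⟩ := hc
    exact h4 (hno i p q hp hq h1 h2 h3)
  have e5 : ∀ i : Fin 5, i + 2 + 2 + 1 = i := by decide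
  -- No two inclusions in the same direction can be consecutive.
  have hup : ∀ i, (∀ x, P x → R i x → R (i + 2) x) → ¬ (∀ x, P x → R (i + 2) x → R (i + 2 + 2) x) := by
    intro i h1 h2
    obtain ⟨x, hx, hi⟩ := hne i
    have := hdis (i + 2 + 2) x hx (h2 x hx (h1 x hx hi))
    rw [e5] at this
    exact this hi
  have hdn : ∀ i, (∀ x, P x → R (i + 2) x → R i x) → ¬ (∀ x, P x → R (i + 2 + 2) x → R (i + 2) x) := by
    intro i h1 h2
    obtain ⟨x, hx, hi⟩ := hne (i + 2 + 2)
    have := hdis (i + 2 + 2) x hx hi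
    rw [e5] at this
    exact this (h1 x hx (h2 x hx hi))
  have hu : ∀ i, (∀ x, P x → R i x → R (i + 2) x) →
      (∀ x, P x → R (i + 2 + 2) x → R (i + 2 + 2 + 2) x) := by
    intro i h1
    have h2 := (hcomp (i + 2)).resolve_left (hup i h1)
    exact (hcomp (i + 2 + 2)).resolve_right (hdn (i + 2) h2)
  have hd : ∀ i, (∀ x, P x → R (i + 2) x → R i x) →
      (∀ x, P x → R (i + 2 + 2 + 2) x → R (i + 2 + 2) x) := by
    intro i h1
    have h2 := (hcomp (i + 2)).resolve_right (hdn i h1)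
    exact (hcomp (i + 2 + 2)).resolve_left (hup (i + 2) h2)
  rcases hcomp 0 with h0 | h0
  · have h4 := hu 0 h0
    have h8 := hu _ h4
    exact hup 3 h8 h0
  · have h4 := hd 0 h0
    have h8 := hd _ h4
    exact hdn 3 h8 h0

/-- The parity gadget below an induced `5`-cycle lying at height `n + 1`. -/
lemma exists_gadget (hconn : G.Connected) (h3 : G.CliqueFree 3)
    (heven : ∀ n : ℕ, 6 ≤ n → Even n → NoInducedCycle G n) {n : ℕ}
    (f : cycleGraph 5 ↪g G) (hf : ∀ i, G.dist v (f i) = n + 1) :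
    ∃ X Y j m a, Geo G v X n ∧ Geo G v Y j ∧ m + 1 < j ∧ j ≤ n ∧ (∀ i ≤ m, X i = Y i) ∧
      G.Adj (X j) (Y j) ∧ CrossFree G X Y n j m ∧ G.Adj (X n) (f a) := by
  have hf1 : ∀ i, G.Adj (f i) (f (i + 1)) := by
    intro i
    rw [f.map_adj_iff, cycleGraph_adj]; right; simp
  obtain ⟨a, p, q, hp, hq, h1, h2, h4, h5⟩ := exists_incomparable (P := fun x => G.dist v x = n)
    (fun i x => G.Adj x (f i)) (by
      intro i
      obtain ⟨X, hX, hXn⟩ := exists_geo hconn (n + 1) (f i) (hf i)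
      refine ⟨X n, hX.1 n (by omega), ?_⟩
      rw [← hXn]
      exact hX.2 n (by omega))
    (fun i x _ h1 h2 => no_tri h3 h1 (hf1 i) h2)
  have hpq : p ≠ q := by rintro rfl; exact h5 h1
  obtain ⟨X, Y, j, m, hX, hY, hXn, hmj, hjn, hag, hend, hcf⟩ := exists_min_pair hconn h3 hp hq hpq
  have hadj : G.Adj (X j) (Y j) := by
    by_contra hna
    rcases hend with h | ⟨rfl, hYn⟩
    · exact hna h
    · subst hXn hYn
      have e : a + 1 + 1 = a + 2 := by rw [add_assoc]; rfl
      exact hole_of_pair h3 heven hX hY hmj hag hcf hna (hf a) (hf (a + 1)) (hf (a + 2)) (hf1 a)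
        (e ▸ hf1 (a + 1)) h1 h2 h4 h5
  refine ⟨X, Y, j, m, a, hX, hY, ?_, hjn, hag, hadj, hcf, hXn ▸ h1⟩
  by_contra hlt
  obtain rfl : j = m + 1 := by omega
  have e1 := hX.2 m (by omega)
  have e2 := hY.2 m (by omega)
  rw [← hag m le_rfl] at e2
  exact no_tri h3 e1 hadj e2

end Geodesics

/-! ### Induced paths as sequences -/

/-- `h 0, …, h N` is an induced path. -/
def IndSeq {V : Type} (G : SimpleGraph V) (h : ℕ → V) (N : ℕ) : Prop :=
  ∀ a b, a < b → b ≤ N → h a ≠ h b ∧ (G.Adj (h a) (h b) ↔ b = a + 1)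

section Sequences

variable {V : Type} {G : SimpleGraph V} {v : V}

lemma IndSeq.inj {h : ℕ → V} {N : ℕ} (H : IndSeq G h N) {a b : ℕ} (ha : a ≤ N) (hb : b ≤ N)
    (hab : h a = h b) : a = b := by
  rcases lt_trichotomy a b with hlt | heq | hlt
  · exact ((H a b hlt hb).1 hab).elim
  · exact heq
  · exact ((H b a hlt ha).1 hab.symm).elim

lemma IndSeq.adj {h : ℕ → V} {N : ℕ} (H : IndSeq G h N) {a b : ℕ} (ha : a ≤ N) (hb : b ≤ N)
    (hab : G.Adj (h a) (h b)) : b = a + 1 ∨ a = b + 1 := by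
  rcases lt_trichotomy a b with hlt | rfl | hlt
  · exact Or.inl ((H a b hlt hb).2.1 hab)
  · exact (hab.ne rfl).elim
  · exact Or.inr ((H b a hlt ha).2.1 hab.symm)

lemma IndSeq.exists_walk {h : ℕ → V} {N : ℕ} (H : IndSeq G h N) :
    ∃ p : G.Walk (h 0) (h N), IsInducedPathW p ∧ p.length = N ∧
      ∀ w, w ∈ p.support ↔ ∃ i ≤ N, w = h i := by
  induction N generalizing h with
  | zero =>
    refine ⟨Walk.nil, ⟨by simp, ?_⟩, rfl, by simp⟩
    intro a ha b hb hab
    simp only [Walk.support_nil, List.mem_singleton] at ha hb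
    rw [ha, hb] at hab
    exact (hab.ne rfl).elim
  | succ N ih =>
    obtain ⟨p, ⟨hp1, hp2⟩, hl, hs⟩ := ih (h := fun i => h (i + 1))
      (fun a b hab hb => by
        have := H (a + 1) (b + 1) (by omega) (by omega)
        exact ⟨this.1, this.2.trans (by omega)⟩)
    have h01 : G.Adj (h 0) (h (0 + 1)) := (H 0 1 (by omega) (by omega)).2.2 rfl
    refine ⟨Walk.cons h01 p, ⟨?_, ?_⟩, by simp [hl], ?_⟩
    · rw [Walk.cons_isPath_iff]
      refine ⟨hp1, fun hmem => ?_⟩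
      obtain ⟨i, hi, e⟩ := (hs _).1 hmem
      have := H.inj (by omega) (by omega) e
      omega
    · have hz : ∀ b ∈ p.support, G.Adj (h 0) b → b = h (0 + 1) := by
        intro b hb hadj
        obtain ⟨i, hi, rfl⟩ := (hs _).1 hb
        have := (H 0 (i + 1) (by omega) (by omega)).2.1 hadj
        obtain rfl : i = 0 := by omega
        rfl
      intro a ha b hb hab
      rw [Walk.support_cons, List.mem_cons] at ha hb
      rw [Walk.edges_cons, List.mem_cons]
      rcases ha with rfl | ha <;> rcases hb with rfl | hb
      · exact (hab.ne rfl).elim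
      · left; rw [hz b hb hab]
      · left; rw [hz a ha hab.symm, Sym2.eq_swap]
      · right; exact hp2 a ha b hb hab
    · intro w
      rw [Walk.support_cons, List.mem_cons, hs]
      constructor
      · rintro (rfl | ⟨i, hi, rfl⟩)
        · exact ⟨0, by omega, rfl⟩
        · exact ⟨i + 1, by omega, rfl⟩
      · rintro ⟨i, hi, rfl⟩
        cases i with
        | zero => exact Or.inl rfl
        | succ i => exact Or.inr ⟨i, by omega, rfl⟩

/-- A shortest path inside a connected set `D` from a set `T` to a vertex having a neighbour in
`K` is induced, meets `T` only in its origin, and only its end has neighbours in `K`. -/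
lemma exists_link {D K T : Set V} (hD : (G.induce D).Connected) (hKD : K ⊆ D)
    (hK : K.Nonempty) (hKT : ∀ w ∈ K, w ∉ T) (hT : ∃ t ∈ D, t ∈ T) :
    ∃ (S : ℕ → V) (l : ℕ), S 0 ∈ T ∧ IndSeq G S l ∧ (∀ i ≤ l, S i ∈ D ∧ S i ∉ K) ∧
      (∀ i, 0 < i → i ≤ l → S i ∉ T) ∧ (∃ w ∈ K, G.Adj (S l) w) ∧
      ∀ i < l, ∀ w ∈ K, ¬ G.Adj (S i) w := by
  classical
  have hex : ∃ l, ∃ S : ℕ → V, S 0 ∈ T ∧ (∀ i ≤ l, S i ∈ D) ∧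
      (∀ i < l, G.Adj (S i) (S (i + 1))) ∧ ∃ w ∈ K, G.Adj (S l) w := by
    obtain ⟨t, htD, htT⟩ := hT
    obtain ⟨k, hk⟩ := hK
    obtain ⟨w⟩ := hD.preconnected ⟨t, htD⟩ ⟨k, hKD hk⟩
    have hpos : 0 < w.length := by
      rcases Nat.eq_zero_or_pos w.length with h | h
      · have := congrArg Subtype.val (Walk.eq_of_length_eq_zero h)
        simp only at this
        subst this
        exact (hKT _ hk htT).elim
      · exact h
    have hadj : ∀ i < w.length, G.Adj (w.getVert i).1 (w.getVert (i + 1)).1 := fun i hi => by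
      simpa using w.adj_getVert_succ hi
    refine ⟨w.length - 1, fun i => (w.getVert i).1, by simpa using htT,
      fun i _ => (w.getVert i).2, fun i hi => hadj i (by omega), k, hk, ?_⟩
    have := hadj (w.length - 1) (by omega)
    rw [Nat.sub_add_cancel hpos, Walk.getVert_length] at this
    exact this
  obtain ⟨S, hS0, hSD, hSa, hSK⟩ := Nat.find_spec hex
  set l := Nat.find hex with hl
  have hmin : ∀ l' < l, ∀ S' : ℕ → V, S' 0 ∈ T → (∀ i ≤ l', S' i ∈ D) →
      (∀ i < l', G.Adj (S' i) (S' (i + 1))) → ∀ w ∈ K, ¬ G.Adj (S' l') w := by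
    intro l' hlt S' h1 h2 h3 w hw hadj
    exact Nat.find_min hex hlt ⟨S', h1, h2, h3, w, hw, hadj⟩
  have hnK : ∀ i < l, ∀ w ∈ K, ¬ G.Adj (S i) w := fun i hi =>
    hmin i hi S hS0 (fun k hk => hSD k (by omega)) (fun k hk => hSa k (by omega))
  have hgap : ∀ a c, 0 < c → a + 1 + c ≤ l → ¬ G.Adj (S a) (S (a + 1 + c)) := by
    intro a c hc hac hadj
    obtain ⟨w, hw, hlw⟩ := hSK
    refine hmin (l - c) (by omega) (fun i => if i ≤ a then S i else S (i + c)) (by simpa using hS0)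
      (fun i hi => ?_) (fun i hi => ?_) w hw ?_
    · by_cases hia : i ≤ a
      · simpa [hia] using hSD i (by omega)
      · simpa [hia] using hSD (i + c) (by omega)
    · rcases lt_trichotomy i a with hia | rfl | hia
      · simpa [hia.le, Nat.succ_le_of_lt hia] using hSa i (by omega)
      · simpa using hadj
      · simpa [show ¬ i ≤ a by omega, show ¬ i + 1 ≤ a by omega,
          show i + 1 + c = i + c + 1 by omega] using hSa (i + c) (by omega)
    · simpa [show ¬ l - c ≤ a by omega, show l - c + c = l by omega] using hlw
  refine ⟨S, l, hS0, ?_, fun i hi => ⟨hSD i hi, fun hiK => ?_⟩, fun i hi0 hi hiT => ?_, hSK, hnK⟩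
  · intro a b hab hb
    refine ⟨fun e => ?_, fun hadj => ?_, fun e => ?_⟩
    · rcases hb.lt_or_eq with hlt | rfl
      · have := hSa b hlt
        rw [← e] at this
        refine hgap a (b - a) (by omega) (by omega) ?_
        rwa [show a + 1 + (b - a) = b + 1 by omega]
      · obtain ⟨w, hw, hlw⟩ := hSK
        rw [← e] at hlw
        exact hnK a hab w hw hlw
    · by_contra hne
      refine hgap a (b - a - 1) (by omega) (by omega) ?_
      rwa [show a + 1 + (b - a - 1) = b by omega]
    · subst e
      exact hSa a (by omega)
  · cases i with
    | zero => exact hKT _ hiK hS0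
    | succ i => exact hnK i (by omega) _ hiK (hSa i (by omega))
  · obtain ⟨w, hw, hlw⟩ := hSK
    refine hmin (l - i) (by omega) (fun k => S (i + k)) hiT (fun k hk => hSD _ (by omega))
      (fun k hk => hSa (i + k) (by omega)) w hw ?_
    simpa [show i + (l - i) = l by omega] using hlw

/-- A bifurcating pair of geodesics `X`, `Y` closed by the edge `X j — Y j`, extended beyond `X n`
by an induced path `S` at height `n + 1`. -/
structure Gadget (G : SimpleGraph V) (v : V) (X Y S : ℕ → V) (n j m l : ℕ) : Prop where
  geoX : Geo G v X n
  geoY : Geo G v Y j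
  lt : m + 1 < j
  le : j ≤ n
  agree : ∀ i ≤ m, X i = Y i
  edge : G.Adj (X j) (Y j)
  cross : CrossFree G X Y n j m
  indS : IndSeq G S l
  distS : ∀ i ≤ l, G.dist v (S i) = n + 1
  start : G.Adj (X n) (S 0)
  onlyX : ∀ i, 0 < i → i ≤ l → ¬ G.Adj (X n) (S i)
  onlyY : ∀ i ≤ l, ¬ G.Adj (Y j) (S i)

lemma crossFree_swap {X Y : ℕ → V} {n m : ℕ} (hX : Geo G v X n)
    (hag : ∀ i ≤ m, X i = Y i) (hcf : CrossFree G X Y n n m) : CrossFree G Y X n n m := by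
  intro a ha b hmb hb
  by_cases ham : a ≤ m
  · rw [← hag a ham, hX.adj_iff ha hb]
    exact ⟨hX.ne ha hb (by omega), fun h => by omega⟩
  · have := hcf b hb a (by omega) ha
    refine ⟨this.1.symm, fun h => ?_⟩
    rcases this.2 h.symm with h | h
    · omega
    · exact Or.inr ⟨h.2, h.1⟩

/-- Linking the parity gadget to a part `K` of `D` that avoids its two top vertices; if the link
starts at the end of `Y`, the two branches exchange roles. -/
lemma exists_full_gadget (h3 : G.CliqueFree 3) {X Y : ℕ → V} {n j m : ℕ} (hX : Geo G v X n)
    (hY : Geo G v Y j) (hmj : m + 1 < j) (hjn : j ≤ n) (hag : ∀ i ≤ m, X i = Y i)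
    (hadj : G.Adj (X j) (Y j)) (hcf : CrossFree G X Y n j m) {D K : Set V}
    (hDd : ∀ x ∈ D, G.dist v x = n + 1) (hD : (G.induce D).Connected) (hKD : K ⊆ D)
    (hK : K.Nonempty) (hKT : ∀ w ∈ K, ¬ G.Adj (X n) w ∧ ¬ G.Adj (Y j) w)
    (ht : ∃ t ∈ D, G.Adj (X n) t) :
    ∃ X Y S l, Gadget G v X Y S n j m l ∧ (∀ w ∈ K, ¬ G.Adj (X n) w ∧ ¬ G.Adj (Y j) w) ∧
      (∀ i ≤ l, S i ∈ D ∧ S i ∉ K) ∧ (∃ w ∈ K, G.Adj (S l) w) ∧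
      ∀ i < l, ∀ w ∈ K, ¬ G.Adj (S i) w := by
  obtain ⟨S, l, hS0, hS, hSD, hST, hSK, hSK'⟩ :=
    exists_link (T := {w | G.Adj (X n) w ∨ G.Adj (Y j) w}) hD hKD hK
      (fun w hw h => h.elim (hKT w hw).1 (hKT w hw).2)
      (by obtain ⟨t, h1, h2⟩ := ht; exact ⟨t, h1, Or.inl h2⟩)
  have hSd : ∀ i ≤ l, G.dist v (S i) = n + 1 := fun i hi => hDd _ (hSD i hi).1
  have hj : ∀ i ≤ l, G.Adj (Y j) (S i) → j = n := by
    intro i hi ha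
    have h1 := hY.1 j le_rfl
    have h2 := hSd i hi
    have := dist_cases (v := v) ha
    omega
  by_cases h0 : G.Adj (X n) (S 0)
  · refine ⟨X, Y, S, l, ⟨hX, hY, hmj, hjn, hag, hadj, hcf, hS, hSd, h0,
      fun i h1 h2 h => hST i h1 h2 (Or.inl h), fun i hi h => ?_⟩, hKT, hSD, hSK, hSK'⟩
    rcases Nat.eq_zero_or_pos i with rfl | hpos
    · obtain rfl := hj _ hi h
      exact no_tri h3 hadj h h0
    · exact hST i hpos hi (Or.inr h)
  · have h0' : G.Adj (Y j) (S 0) := hS0.resolve_left h0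
    obtain rfl := hj 0 (by omega) h0'
    refine ⟨Y, X, S, l, ⟨hY, hX, hmj, le_rfl, fun i hi => (hag i hi).symm, hadj.symm,
      crossFree_swap hX hag hcf, hS, hSd, h0', fun i h1 h2 h => hST i h1 h2 (Or.inr h),
      fun i hi h => ?_⟩, fun w hw => (hKT w hw).symm, hSD, hSK, hSK'⟩
    rcases Nat.eq_zero_or_pos i with rfl | hpos
    · exact h0 h
    · exact hST i hpos hi (Or.inl h)

/-- The first route through the gadget: up `X` and then along `S`. -/
def route (X S : ℕ → V) (n : ℕ) : ℕ → V := fun i => if i ≤ n then X i else S (i - n - 1)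

variable {X Y S : ℕ → V} {n j m l : ℕ}

lemma route_le {i : ℕ} (h : i ≤ n) : route X S n i = X i := by simp [route, h]

lemma route_gt {i : ℕ} (h : n < i) : route X S n i = S (i - n - 1) := by
  simp [route, show ¬ i ≤ n by omega]

lemma route_add (i : ℕ) : route X S n (n + 1 + i) = S i := by
  rw [route_gt (by omega)]; congr 1; omega

lemma Gadget.indSeq_route (g : Gadget G v X Y S n j m l) : IndSeq G (route X S n) (n + 1 + l) := by
  intro a b hab hb
  by_cases hbn : b ≤ n
  · rw [route_le hbn, route_le (by omega), g.geoX.adj_iff (by omega) hbn]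
    exact ⟨g.geoX.ne (by omega) hbn (by omega), by omega⟩
  · rw [route_gt (i := b) (by omega)]
    by_cases han : a ≤ n
    · rw [route_le han]
      have h1 := g.geoX.1 a han
      have h2 := g.distS (b - n - 1) (by omega)
      refine ⟨fun e => by rw [e] at h1; omega, fun hadj => ?_, fun e => ?_⟩
      · have := dist_cases (v := v) hadj
        obtain rfl : a = n := by omega
        by_contra hne
        exact g.onlyX _ (by omega) (by omega) hadj
      · obtain rfl : a = n := by omega
        subst e
        simpa using g.start
    · rw [route_gt (by omega)]
      have := g.indS (a - n - 1) (b - n - 1) (by omega) (by omega)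
      exact ⟨this.1, this.2.trans (by omega)⟩

lemma Gadget.cross_route (g : Gadget G v X Y S n j m l) :
    CrossFree G (route X S n) Y (n + 1 + l) j m := by
  intro a ha b hmb hbj
  by_cases han : a ≤ n
  · rw [route_le han]
    exact g.cross a han b hmb hbj
  · rw [route_gt (by omega)]
    have h1 := g.geoY.1 b hbj
    have h2 := g.distS (a - n - 1) (by omega)
    have := g.le
    refine ⟨fun e => by rw [e] at h2; omega, fun hadj => ?_⟩
    have := dist_cases (v := v) hadj
    obtain rfl : b = j := by omega
    exact (g.onlyY _ (by omega) hadj.symm).elim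

/-- The second route, up `Y`, across the edge `Y j — X j`, and on along the first route; it is one
longer than the first. -/
lemma Gadget.indSeq_route2 (g : Gadget G v X Y S n j m l) :
    IndSeq G (fun t => if t ≤ j then Y t else route X S n (t - 1)) (n + 2 + l) := by
  have hlt := g.lt
  have hle := g.le
  intro a b hab hb
  by_cases hbj : b ≤ j
  · simp only [hbj, show a ≤ j by omega, if_true]
    rw [g.geoY.adj_iff (by omega) hbj]
    exact ⟨g.geoY.ne (by omega) hbj (by omega), by omega⟩
  · by_cases haj : a ≤ j
    · simp only [hbj, haj, if_true, if_false]
      by_cases ham : a ≤ m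
      · rw [← g.agree a ham, ← route_le (X := X) (S := S) (show a ≤ n by omega)]
        have := g.indSeq_route a (b - 1) (by omega) (by omega)
        exact ⟨this.1, this.2.trans (by omega)⟩
      · have := g.cross_route (b - 1) (by omega) a (by omega) haj
        refine ⟨this.1.symm, fun h => ?_, fun h => ?_⟩
        · rcases this.2 h.symm with h | h <;> omega
        · obtain rfl : a = j := by omega
          subst h
          rw [route_le (by omega)]
          exact g.edge.symm
    · simp only [hbj, haj, if_false]
      have := g.indSeq_route (a - 1) (b - 1) (by omega) (by omega)
      exact ⟨this.1, this.2.trans (by omega)⟩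

/-! ### The block is four-colourable -/

lemma exists_color_seq (Φ : ℕ → Finset (Fin 4)) (hΦ : ∀ i, (Φ i).card ≤ 2) (c₀ : Fin 4) :
    ∃ c : ℕ → Fin 4, c 0 = c₀ ∧ ∀ i, c (i + 1) ∉ Φ (i + 1) ∧ c (i + 1) ≠ c i := by
  have h : ∀ i (x : Fin 4), ∃ y, y ∉ Φ i ∧ y ≠ x := by
    intro i x
    by_contra hno
    push Not at hno
    have hall : (Finset.univ : Finset (Fin 4)) ⊆ insert x (Φ i) := by
      intro y _
      rw [Finset.mem_insert]
      by_cases hy : y ∈ Φ i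
      · exact Or.inr hy
      · exact Or.inl (hno y hy)
    have := Finset.card_le_card hall
    have := Finset.card_insert_le x (Φ i)
    have := hΦ i
    simp at *
    omega
  choose g hg using h
  exact ⟨fun i => Nat.rec c₀ (fun i x => g (i + 1) x) i, rfl, fun i => hg (i + 1) _⟩

/-- In a triangle-free graph the neighbours of a vertex on a `5`-cycle lie in a pair
`{r, r + 2}`. -/
lemma exists_pair_of_indep : ∀ s : Finset (Fin 5), (∀ i ∈ s, i + 1 ∉ s) →
    ∃ r, s ⊆ {r, r + 2} := by
  decide

/-- A unicyclic configuration (an induced path `Z` with an ear `Y` attached at heights `m` and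
`j`) together with a `5`-cycle is `4`-colourable. The cycle uses three colours, arranged so that
the last vertex `Y j` of the ear sees one colour only; every other vertex sees at most two, and
the rest is coloured greedily along `Z` and then along the ear. -/
lemma setCol_block (h3 : G.CliqueFree 3) {Z Y : ℕ → V} {N j m : ℕ} (hZ : IndSeq G Z N)
    (hY : Geo G v Y j) (hag : ∀ i ≤ m, Z i = Y i) (hmN : m ≤ N) (hmj : m < j)
    (hcf : CrossFree G Z Y N j m) (f : cycleGraph 5 ↪g G) :
    SetCol G ({x | ∃ i ≤ N, x = Z i} ∪ {x | ∃ i ≤ j, x = Y i} ∪ {x | ∃ i, x = f i}) 4 := by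
  classical
  have hf : ∀ i k, G.Adj (f i) (f k) → k = i + 1 ∨ i = k + 1 := by
    intro i k h
    rw [f.map_adj_iff, cycleGraph_adj] at h
    rcases h with h | h
    · right; rw [← h]; abel
    · left; rw [← h]; abel
  have hf1 : ∀ i, G.Adj (f i) (f (i + 1)) := by
    intro i
    rw [f.map_adj_iff, cycleGraph_adj]; right; simp
  have hpair : ∀ x, ∃ r, (Finset.univ.filter fun i => G.Adj x (f i)) ⊆ {r, r + 2} := by
    intro x
    apply exists_pair_of_indep
    intro i hi hi'
    simp only [Finset.mem_filter, Finset.mem_univ, true_and] at hi hi'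
    exact no_tri h3 hi (hf1 i) hi'
  obtain ⟨r, hr⟩ := hpair (Y j)
  have hκ : ∀ r : Fin 5, ∃ κ : Fin 5 → Fin 4, κ r = κ (r + 2) ∧ ∀ i, κ i ≠ κ (i + 1) := by
    intro r
    refine ⟨fun i => (![0, 1, 0, 2, 1] : Fin 5 → Fin 4) (i - r), ?_, ?_⟩
    · revert r; decide
    · revert r; decide
  obtain ⟨κ, hκr, hκ⟩ := hκ r
  let F : V → Finset (Fin 4) := fun x => (Finset.univ.filter fun i => G.Adj x (f i)).image κ
  have hFmem : ∀ x i, G.Adj x (f i) → κ i ∈ F x := by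
    intro x i h
    exact Finset.mem_image_of_mem _ (by simpa using h)
  have hF2 : ∀ x, (F x).card ≤ 2 := by
    intro x
    obtain ⟨r, hr⟩ := hpair x
    exact Finset.card_image_le.trans ((Finset.card_le_card hr).trans Finset.card_le_two)
  have hF1 : (F (Y j)).card ≤ 1 := by
    have : F (Y j) ⊆ {κ r} := by
      intro y hy
      obtain ⟨i, hi, rfl⟩ := Finset.mem_image.1 hy
      have := hr hi
      simp only [Finset.mem_insert, Finset.mem_singleton] at this
      rcases this with rfl | rfl
      · simp
      · simp [hκr]
    simpa using Finset.card_le_card this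
  have hc0 : ∃ c₀, c₀ ∉ F (Z 0) := by
    by_contra hno
    push Not at hno
    have := Finset.card_le_card (fun y _ => hno y : (Finset.univ : Finset (Fin 4)) ⊆ F (Z 0))
    have := hF2 (Z 0)
    simp at *
    omega
  obtain ⟨c₀, hc0⟩ := hc0
  obtain ⟨zc, hz0, hz⟩ := exists_color_seq (fun i => F (Z i)) (fun i => hF2 _) c₀
  have hzF : ∀ i, zc i ∉ F (Z i) := by
    intro i
    cases i with
    | zero => rw [hz0]; exact hc0
    | succ i => exact (hz i).1
  obtain ⟨yc, hy0, hy⟩ := exists_color_seq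
    (fun k => if m + k = j then insert (zc j) (F (Y j)) else F (Y (m + k))) (by
      intro k
      by_cases hk : m + k = j
      · simp only [hk, if_true]
        exact (Finset.card_insert_le _ _).trans (by omega)
      · simp only [hk, if_false]
        exact hF2 _) (zc m)
  have hyF : ∀ k, 0 < k → yc k ∉ F (Y (m + k)) := by
    intro k hk
    obtain ⟨k, rfl⟩ : ∃ k', k = k' + 1 := ⟨k - 1, by omega⟩
    have := (hy k).1
    by_cases hj : m + (k + 1) = j
    · rw [hj]
      simp only [hj, if_true, Finset.mem_insert, not_or] at this
      exact this.2
    · simpa only [hj, if_false] using this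
  have hyj : ∀ k, 0 < k → m + k = j → yc k ≠ zc j := by
    intro k hk hj
    obtain ⟨k, rfl⟩ : ∃ k', k = k' + 1 := ⟨k - 1, by omega⟩
    have := (hy k).1
    simp only [hj, if_true, Finset.mem_insert, not_or] at this
    exact this.1
  let c : V → Fin 4 := fun x =>
    if h : ∃ i, x = f i then κ h.choose
    else if h : ∃ i ≤ N, x = Z i then zc h.choose
    else if h : ∃ k, 0 < k ∧ m + k ≤ j ∧ x = Y (m + k) then yc h.choose else 0
  have hcf' : ∀ i, c (f i) = κ i := by
    intro i
    have h : ∃ k, f i = f k := ⟨i, rfl⟩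
    simp only [c, dif_pos h]
    rw [← f.injective h.choose_spec]
  have hcZ : ∀ i ≤ N, (¬ ∃ k, Z i = f k) → c (Z i) = zc i := by
    intro i hi hn
    have h : ∃ k ≤ N, Z i = Z k := ⟨i, hi, rfl⟩
    simp only [c, dif_neg hn, dif_pos h]
    rw [← hZ.inj hi h.choose_spec.1 h.choose_spec.2]
  have hcY : ∀ k, 0 < k → m + k ≤ j → (¬ ∃ i, Y (m + k) = f i) → c (Y (m + k)) = yc k := by
    intro k hk hkj hn
    have hn2 : ¬ ∃ i ≤ N, Y (m + k) = Z i := by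
      rintro ⟨i, hi, e⟩
      exact (hcf i hi (m + k) (by omega) hkj).1 e.symm
    have h : ∃ k', 0 < k' ∧ m + k' ≤ j ∧ Y (m + k) = Y (m + k') := ⟨k, hk, hkj, rfl⟩
    simp only [c, dif_neg hn, dif_neg hn2, dif_pos h]
    obtain ⟨h1, h2, h4⟩ := h.choose_spec
    by_cases e : k = h.choose
    · rw [← e]
    · exact (hY.ne hkj h2 (by omega) h4).elim
  have hcls : ∀ x ∈ ({x | ∃ i ≤ N, x = Z i} ∪ {x | ∃ i ≤ j, x = Y i} ∪ {x | ∃ i, x = f i}),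
      (∃ i, x = f i) ∨ (∃ i ≤ N, x = Z i ∧ c x = zc i ∧ c x ∉ F x) ∨
        ∃ k, 0 < k ∧ m + k ≤ j ∧ x = Y (m + k) ∧ c x = yc k ∧ c x ∉ F x := by
    intro x hx
    by_cases hxf : ∃ i, x = f i
    · exact Or.inl hxf
    right
    have hZc : (∃ i ≤ N, x = Z i) → ∃ i ≤ N, x = Z i ∧ c x = zc i ∧ c x ∉ F x := by
      rintro ⟨i, hi, rfl⟩
      refine ⟨i, hi, rfl, hcZ i hi hxf, ?_⟩
      rw [hcZ i hi hxf]
      exact hzF i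
    rcases hx with (hx | ⟨i, hi, rfl⟩) | hx
    · exact Or.inl (hZc hx)
    · by_cases him : i ≤ m
      · exact Or.inl (hZc ⟨i, him.trans hmN, (hag i him).symm⟩)
      · right
        obtain ⟨k, rfl⟩ : ∃ k, i = m + k := ⟨i - m, by omega⟩
        refine ⟨k, by omega, hi, rfl, hcY k (by omega) hi hxf, ?_⟩
        rw [hcY k (by omega) hi hxf]
        exact hyF k (by omega)
    · exact (hxf hx).elim
  have hZY : ∀ i ≤ N, ∀ k, 0 < k → m + k ≤ j → G.Adj (Z i) (Y (m + k)) → zc i ≠ yc k := by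
    intro i hi k hk hkj hadj
    rcases (hcf i hi (m + k) (by omega) hkj).2 hadj with ⟨rfl, h⟩ | ⟨rfl, h⟩
    · obtain rfl : k = 0 + 1 := by omega
      rw [← hy0]
      exact (hy 0).2.symm
    · exact (hyj k hk h).symm
  refine ⟨fun x => (c x : ℕ), fun x _ => (c x).2, ?_⟩
  intro x hx y hy' hxy heq
  have heq : c x = c y := Fin.ext heq
  rcases hcls x hx with ⟨i, rfl⟩ | ⟨i, hi, rfl, hci, hcF⟩ | ⟨i, hi0, hi, rfl, hci, hcF⟩ <;>
    rcases hcls y hy' with ⟨k, rfl⟩ | ⟨k, hk, rfl, hck, hcF'⟩ | ⟨k, hk0, hk, rfl, hck, hcF'⟩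
  · rw [hcf', hcf'] at heq
    rcases hf i k hxy with rfl | rfl
    · exact hκ i heq
    · exact hκ k heq.symm
  · apply hcF'
    rw [← heq, hcf']
    exact hFmem _ _ hxy.symm
  · apply hcF'
    rw [← heq, hcf']
    exact hFmem _ _ hxy.symm
  · apply hcF
    rw [heq, hcf']
    exact hFmem _ _ hxy
  · rw [hci, hck] at heq
    rcases hZ.adj hi hk hxy with rfl | rfl
    · exact (hz i).2 heq.symm
    · exact (hz k).2 heq
  · exact hZY i hi k hk0 hk hxy (by rw [← hci, ← hck, heq])
  · apply hcF
    rw [heq, hcf']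
    exact hFmem _ _ hxy
  · exact hZY k hk i hi0 hi hxy.symm (by rw [← hci, ← hck, heq])
  · rw [hci, hck] at heq
    rcases (hY.adj_iff hi hk).1 hxy with h | h
    · obtain rfl : k = i + 1 := by omega
      exact (hy i).2 heq.symm
    · obtain rfl : i = k + 1 := by omega
      exact (hy k).2 heq

end Sequences

/-! ### Assembling the parity changing path -/

/-- A gadget and a `5`-cycle form the regular block, the path is `S l, w₁, w₂`, and `H` is the
last block. -/
lemma exists_pcp {V : Type} {G : SimpleGraph V} {v : V} (hconn : G.Connected)
    (h3 : G.CliqueFree 3) {X Y S : ℕ → V} {n j m l : ℕ} (g : Gadget G v X Y S n j m l)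
    (f : cycleGraph 5 ↪g G) {w₁ w₂ : V} {H : Set V}
    (hy1 : G.Adj (S l) w₁) (h12 : G.Adj w₁ w₂) (hw2 : w₂ ∈ H) (hw1 : w₁ ∉ H)
    (hH : (G.induce H).Connected) (hw1H : ∀ h ∈ H, G.Adj w₁ h → h = w₂)
    (hd : ∀ z ∈ insert w₁ H, G.dist v z = n + 1)
    (hX : ∀ z ∈ insert w₁ H, ¬ G.Adj (X n) z) (hY : ∀ z ∈ insert w₁ H, ¬ G.Adj (Y j) z)
    (hf : ∀ i, ∀ z ∈ insert w₁ H, f i ≠ z ∧ ¬ G.Adj (f i) z)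
    (hS : ∀ i ≤ l, ∀ z ∈ insert w₁ H, S i ≠ z ∧ (G.Adj (S i) z → i = l ∧ z = w₁)) :
    ∃ P : PCP G 1, P.IsStrong ∧ P.origin = v ∧ P.lastBlock = H := by
  have hle := g.le
  have hlt := g.lt
  set Z := route X S n with hZdef
  have hZ : IndSeq G Z (n + 1 + l) := g.indSeq_route
  obtain ⟨B, hB⟩ : ∃ B : Set V,
      B = {x | ∃ i ≤ n + 1 + l, x = Z i} ∪ {x | ∃ i ≤ j, x = Y i} ∪ {x | ∃ i, x = f i} := ⟨_, rfl⟩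
  have hZB : ∀ i ≤ n + 1 + l, Z i ∈ B := fun i hi => by
    rw [hB]; exact Or.inl (Or.inl ⟨i, hi, rfl⟩)
  have hYB : ∀ i ≤ j, Y i ∈ B := fun i hi => by
    rw [hB]; exact Or.inl (Or.inr ⟨i, hi, rfl⟩)
  have hfB : ∀ i, f i ∈ B := fun i => by
    rw [hB]; exact Or.inr ⟨i, rfl⟩
  have hZend : Z (n + 1 + l) = S l := route_add l
  have hZ0 : Z 0 = v := by
    rw [hZdef, route_le (by omega)]; exact g.geoX.zero hconn
  have hcol : SetCol G B 4 := by
    rw [hB]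
    refine setCol_block h3 hZ g.geoY (fun i hi => ?_) (by omega) (by omega) g.cross_route f
    rw [hZdef, route_le (by omega)]; exact g.agree i hi
  -- The only edge from the block to the rest is the first edge of the path.
  have hsep : ∀ b ∈ B, ∀ z ∈ insert w₁ H, b ≠ z ∧ (G.Adj b z → b = S l ∧ z = w₁) := by
    intro b hb z hz
    have hdz := hd z hz
    have low : ∀ (W : ℕ → V) (k : ℕ), Geo G v W k → k ≤ n → ¬ G.Adj (W k) z → ∀ i ≤ k,
        W i ≠ z ∧ ¬ G.Adj (W i) z := by
      intro W k hW hk hna i hi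
      have h1 := hW.1 i hi
      refine ⟨fun e => by rw [e] at h1; omega, fun hadj => ?_⟩
      have := dist_cases (v := v) hadj
      obtain rfl : i = k := by omega
      exact hna hadj
    rw [hB] at hb
    rcases hb with (⟨i, hi, rfl⟩ | ⟨i, hi, rfl⟩) | ⟨i, rfl⟩
    · by_cases hin : i ≤ n
      · rw [hZdef, route_le hin]
        have := low X n g.geoX le_rfl (hX z hz) i hin
        exact ⟨this.1, fun h => (this.2 h).elim⟩
      · rw [hZdef, route_gt (by omega)]
        have := hS (i - n - 1) (by omega) z hz
        refine ⟨this.1, fun h => ?_⟩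
        obtain ⟨h1, h2⟩ := this.2 h
        exact ⟨by rw [h1], h2⟩
    · have := low Y j g.geoY hle (hY z hz) i hi
      exact ⟨this.1, fun h => (this.2 h).elim⟩
    · exact ⟨(hf i z hz).1, fun h => ((hf i z hz).2 h).elim⟩
  have hw1m : w₁ ∈ insert w₁ H := Set.mem_insert _ _
  have hHm : ∀ h ∈ H, h ∈ insert w₁ H := fun h hh => Set.mem_insert_of_mem _ hh
  have hyB : S l ∈ B := by rw [← hZend]; exact hZB _ le_rfl
  have hyw2 : ¬ G.Adj (S l) w₂ := fun h => no_tri h3 hy1 h12 h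
  have hyH : S l ∉ H := fun h => (hsep _ hyB _ (hHm _ h)).1 rfl
  let p : G.Walk (S l) w₂ := Walk.cons hy1 (Walk.cons h12 Walk.nil)
  have hps : ∀ w, w ∈ p.support ↔ w = S l ∨ w = w₁ ∨ w = w₂ := by
    intro w; simp [p]
  have hpind : IsInducedPathW p := by
    constructor
    · simp only [p, Walk.cons_isPath_iff, Walk.support_cons, Walk.support_nil]
      have e : S l ≠ w₂ := fun e => hyH (e ▸ hw2)
      simp [h12.ne, hy1.ne, e]
    · intro a ha b hb hab
      rw [hps] at ha hb
      rcases ha with rfl | rfl | rfl <;> rcases hb with rfl | rfl | rfl <;>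
        first
        | exact (hab.ne rfl).elim
        | exact (hyw2 hab).elim
        | exact (hyw2 hab.symm).elim
        | simp [p]
  obtain ⟨q1, hq1, hl1, hs1⟩ := hZ.exists_walk
  obtain ⟨q2, hq2, hl2, hs2⟩ := g.indSeq_route2.exists_walk
  have e2 : (fun t => if t ≤ j then Y t else route X S n (t - 1)) (n + 2 + l) = S l := by
    simp only [show ¬ n + 2 + l ≤ j by omega, if_false]
    rw [← hZend, hZdef]; congr 1; omega
  have e20 : (fun t => if t ≤ j then Y t else route X S n (t - 1)) 0 = v := by
    simpa using g.geoY.zero hconn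
  have hq1B : ∀ w ∈ q1.support, w ∈ B := by
    intro w hw
    obtain ⟨i, hi, rfl⟩ := (hs1 w).1 hw
    exact hZB i hi
  have hq2B : ∀ w ∈ q2.support, w ∈ B := by
    intro w hw
    obtain ⟨i, hi, rfl⟩ := (hs2 w).1 hw
    by_cases hij : i ≤ j
    · simpa [hij] using hYB i hij
    · simpa [hij] using hZB (i - 1) (by omega)
  have w1 : ∃ q : G.Walk v (S l), IsInducedPathW q ∧ (∀ w ∈ q.support, w ∈ B) ∧
      q.length = n + 1 + l := by
    have : ∃ q : G.Walk (Z 0) (Z (n + 1 + l)), IsInducedPathW q ∧ (∀ w ∈ q.support, w ∈ B) ∧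
      q.length = n + 1 + l := ⟨q1, hq1, hq1B, hl1⟩
    rwa [hZ0, hZend] at this
  have w2 : ∃ q : G.Walk v (S l), IsInducedPathW q ∧ (∀ w ∈ q.support, w ∈ B) ∧
      q.length = n + 2 + l := by
    have : ∃ q : G.Walk ((fun t => if t ≤ j then Y t else route X S n (t - 1)) 0)
      ((fun t => if t ≤ j then Y t else route X S n (t - 1)) (n + 2 + l)), IsInducedPathW q ∧
      (∀ w ∈ q.support, w ∈ B) ∧ q.length = n + 2 + l := ⟨q2, hq2, hq2B, hl2⟩
    rwa [e20, e2] at this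
  have hpar : (∃ q : G.Walk v (S l), IsInducedPathW q ∧ (∀ w ∈ q.support, w ∈ B) ∧
      Odd q.length) ∧ (∃ q : G.Walk v (S l), IsInducedPathW q ∧ (∀ w ∈ q.support, w ∈ B) ∧
      Even q.length) := by
    obtain ⟨q1, a1, b1, c1⟩ := w1
    obtain ⟨q2, a2, b2, c2⟩ := w2
    rcases Nat.even_or_odd (n + l) with he | ho
    · exact ⟨⟨q1, a1, b1, by rw [c1]; grind⟩, ⟨q2, a2, b2, by rw [c2]; grind⟩⟩
    · exact ⟨⟨q2, a2, b2, by rw [c2]; grind⟩, ⟨q1, a1, b1, by rw [c1]; grind⟩⟩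
  refine ⟨{
    block := fun _ => B
    lastBlock := H
    x := Fin.cons v fun _ => w₂
    y := fun _ => S l
    path := fun _ => p
    x_mem := fun i => ?_
    y_mem := fun _ => hyB
    xlast_mem := hw2
    path_induced := fun _ => hpind
    path_length := fun _ => le_refl 2
    blocks_disjoint := fun i j h => (h (Subsingleton.elim _ _)).elim
    block_last_disjoint := fun _ => Set.disjoint_left.2 fun b hb hbH =>
      (hsep b hb b (hHm b hbH)).1 rfl
    block_path_inter := fun i j w hw hwp => Or.inl ⟨Subsingleton.elim _ _, ?_⟩
    last_path_inter := fun j w hw hwp => ⟨by omega, ?_⟩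
    paths_disjoint := fun i j h => (h (Subsingleton.elim _ _)).elim
    edges_within := ?_
    odd_path := fun i => ?_
    even_path := fun i => ?_
    last_connected := hH
    block_chrom := fun _ => ?_ }, ?_, rfl, rfl⟩
  · obtain rfl : i = 0 := Subsingleton.elim _ _
    change v ∈ B
    rw [← hZ0]; exact hZB 0 (by omega)
  · rcases (hps w).1 hwp with h | h | h
    · exact h
    · exact ((hsep w hw w₁ hw1m).1 h).elim
    · exact ((hsep w hw w₂ (hHm _ hw2)).1 h).elim
  · change w = w₂
    rcases (hps w).1 hwp with h | h | h
    · rw [h] at hw; exact (hyH hw).elim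
    · rw [h] at hw; exact (hw1 hw).elim
    · exact h
  · -- Every vertex lies in the block or in `insert w₁ H`, which separate except at `S l — w₁`.
    have hmem : ∀ a, a ∈ (⋃ _ : Fin 1, B) ∪ H ∪ (⋃ _ : Fin 1, {w | w ∈ p.support}) →
        a ∈ B ∨ a = w₁ ∨ a ∈ H := by
      intro a ha
      rcases ha with (ha | ha) | ha
      · obtain ⟨_, h⟩ := Set.mem_iUnion.1 ha
        exact Or.inl h
      · exact Or.inr (Or.inr ha)
      · obtain ⟨_, h⟩ := Set.mem_iUnion.1 ha
        rcases (hps a).1 h with rfl | rfl | rfl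
        · exact Or.inl hyB
        · exact Or.inr (Or.inl rfl)
        · exact Or.inr (Or.inr hw2)
    have hpS : S l ∈ p.support := (hps _).2 (Or.inl rfl)
    have hp1 : w₁ ∈ p.support := (hps _).2 (Or.inr (Or.inl rfl))
    have hp2 : w₂ ∈ p.support := (hps _).2 (Or.inr (Or.inr rfl))
    intro a b ha₀ hb₀ hab
    rcases hmem a ha₀ with ha | rfl | ha <;> rcases hmem b hb₀ with hb | rfl | hb
    · exact Or.inl ⟨0, ha, hb⟩
    · obtain ⟨rfl, -⟩ := (hsep a ha _ hw1m).2 hab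
      exact Or.inr (Or.inr ⟨0, hpS, hp1⟩)
    · obtain ⟨-, rfl⟩ := (hsep a ha b (hHm b hb)).2 hab
      exact (hw1 hb).elim
    · obtain ⟨rfl, -⟩ := (hsep b hb _ hw1m).2 hab.symm
      exact Or.inr (Or.inr ⟨0, hp1, hpS⟩)
    · exact (hab.ne rfl).elim
    · obtain rfl := hw1H b hb hab
      exact Or.inr (Or.inr ⟨0, hp1, hp2⟩)
    · obtain ⟨-, rfl⟩ := (hsep b hb a (hHm a ha)).2 hab.symm
      exact (hw1 ha).elim
    · obtain rfl := hw1H a ha hab.symm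
      exact Or.inr (Or.inr ⟨0, hp2, hp1⟩)
    · exact Or.inr (Or.inl ⟨ha, hb⟩)
  · obtain rfl : i = 0 := Subsingleton.elim _ _
    exact hpar.1
  · obtain rfl : i = 0 := Subsingleton.elim _ _
    exact hpar.2
  · exact_mod_cast ((setCol_iff G B 4).2 hcol).chromaticNumber_le
  · exact fun _ => ⟨f, hfB⟩

lemma lt_chiSet {V : Type} [Fintype V] {G : SimpleGraph V} {A : Set V} {t : ℕ}
    (h : ¬ SetCol G A t) : t < chiSet G A := by
  classical
  by_contra hlt
  apply h
  rw [← setCol_iff]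
  have hcol : (G.induce A).Colorable (G.induce A).chromaticNumber.toNat :=
    colorable_chromaticNumber (colorable_of_fintype _)
  exact hcol.mono (by unfold chiSet at hlt; omega)

lemma connected_singleton {V : Type} (G : SimpleGraph V) (w : V) :
    (G.induce ({w} : Set V)).Connected := by
  have : Subsingleton ({w} : Set V) := ⟨fun a b => Subtype.ext (a.2.trans b.2.symm)⟩
  have : Nonempty ({w} : Set V) := ⟨⟨w, rfl⟩⟩
  exact ⟨fun a b => by rw [Subsingleton.elim a b]⟩

/-- Inside a connected set `K` seen by `y`, a path `y, w₁, w₂` leads to a last block avoiding the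
neighbourhoods of `y` and `w₁`, at the cost of two colours. -/
lemma exists_tail {V : Type} {G : SimpleGraph V} (h3 : G.CliqueFree 3) {K : Set V} {t : ℕ}
    (hK : (G.induce K).Connected) (hcol : ¬ SetCol G K (t + 2)) {y : V}
    (hy : ∃ w ∈ K, G.Adj y w) :
    ∃ w₁ w₂ H, w₁ ∈ K ∧ H ⊆ K ∧ G.Adj y w₁ ∧ G.Adj w₁ w₂ ∧ w₂ ∈ H ∧ w₁ ∉ H ∧
      (G.induce H).Connected ∧ (∀ h ∈ H, G.Adj w₁ h → h = w₂) ∧ (∀ h ∈ H, ¬ G.Adj y h) ∧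
      ¬ SetCol G H t := by
  obtain ⟨H₁, hH₁, hc₁, hn₁, hsep₁⟩ := exists_comp (fun h => hcol (SetCol.of_diff h3 y h))
  obtain ⟨x₁, hx₁⟩ := nonempty_of_not_setCol hn₁
  obtain ⟨w, hw, hyw⟩ := hy
  have hwH : w ∉ H₁ := fun h => (hH₁ h).2 hyw
  obtain ⟨w₁, hw₁, hw₁H, b, hb, hbH, hwb⟩ := exists_bdry hK hw hwH (hH₁ hx₁).1 hx₁
  have hyw₁ : G.Adj y w₁ := by
    by_contra hna
    exact hsep₁ w₁ ⟨hw₁, hna⟩ hw₁H b hbH hwb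
  obtain ⟨H₂, hH₂, hc₂, hn₂, hsep₂⟩ := exists_comp (fun h => hn₁ (SetCol.of_diff h3 w₁ h))
  obtain ⟨x₂, hx₂⟩ := nonempty_of_not_setCol hn₂
  have hbH₂ : b ∉ H₂ := fun h => (hH₂ h).2 hwb
  obtain ⟨w₂, hw₂, hw₂H, e, he, heH, hwe⟩ := exists_bdry hc₁ hbH hbH₂ (hH₂ hx₂).1 hx₂
  have hw₁₂ : G.Adj w₁ w₂ := by
    by_contra hna
    exact hsep₂ w₂ ⟨hw₂, hna⟩ hw₂H e heH hwe
  have hsub : insert w₂ H₂ ⊆ H₁ := Set.insert_subset hw₂ fun x hx => (hH₂ hx).1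
  refine ⟨w₁, w₂, insert w₂ H₂, hw₁, fun x hx => (hH₁ (hsub hx)).1, hyw₁, hw₁₂,
    Set.mem_insert _ _, fun h => hw₁H (hsub h), ?_, ?_, fun h hh => (hH₁ (hsub hh)).2,
    fun h => hn₂ (h.mono (Set.subset_insert _ _) le_rfl)⟩
  · rw [Set.insert_eq]
    exact connected_induce_union (connected_singleton G w₂).preconnected hc₂.preconnected rfl heH hwe
  · rintro h (rfl | hh) hadj
    · rfl
    · exact ((hH₂ hh).2 hadj).elim

/-! ### The theorem -/

/-- Suppose every graph of `C_{3,5,2k≥6}` has chromatic number `< c'`.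
In a connected graph of `C_{3,2k≥6}` with `χ(G) ≥ δ ≥ 2c'`, from any vertex `v` one can
grow a strong PCP of order 1 with origin `v` and leftovers at least `δ/2 - 15`. -/
theorem strong_pcp_order_one_exists (c' : ℕ) (hc' : 0 < c')
    (hC : ∀ (W : Type) [Fintype W] (H : SimpleGraph W),
      H.CliqueFree 3 → NoInducedCycle H 5 →
      (∀ n : ℕ, 6 ≤ n → Even n → NoInducedCycle H n) → chi H < c')
    (V : Type) [Fintype V] (G : SimpleGraph V) (hconn : G.Connected)
    (h3 : G.CliqueFree 3)
    (heven : ∀ n : ℕ, 6 ≤ n → Even n → NoInducedCycle G n)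
    (v : V) (δ : ℕ) (hδ1 : 2 * c' ≤ δ) (hδ2 : δ ≤ chi G) :
    ∃ P : PCP G 1, P.IsStrong ∧ P.origin = v ∧
      (δ : ℝ) / 2 - 15 ≤ (P.leftovers : ℝ) := by
  have h4 := four_le_of_bound c' hC
  have hG : ∀ t, SetCol G Set.univ t → chi G ≤ t := by
    rintro t ⟨c, h1, h2⟩
    have hcol : G.Colorable t := ⟨Coloring.mk (fun x => (⟨c x, h1 x trivial⟩ : Fin t))
      fun {x y} hxy h => h2 x trivial y trivial hxy (congrArg Fin.val h)⟩
    exact ENat.toNat_le_of_le_natCast hcol.chromaticNumber_le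
  obtain ⟨d, hd⟩ : ∃ d, d = (δ + 1) / 2 := ⟨_, rfl⟩
  -- A component `D` of some level needs at least half of the colours.
  obtain ⟨k, hk⟩ : ∃ k, ¬ SetCol G (level G v k) (d - 1) := by
    by_contra hno
    push Not at hno
    have := hG _ (colorable_of_levels v hconn _ hno)
    omega
  obtain ⟨D, hDk, hDc, hDn, -⟩ := exists_comp hk
  obtain ⟨f, hf⟩ := exists_C5 c' hc' hC h3 heven (A := D)
    (fun h => hDn (h.mono subset_rfl (by omega)))
  have hf1 : ∀ i, G.Adj (f i) (f (i + 1)) := by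
    intro i
    rw [f.map_adj_iff, cycleGraph_adj]; right; simp
  obtain ⟨n, rfl⟩ : ∃ n, k = n + 1 := by
    cases k with
    | zero =>
      have h0 : ∀ i, f i = v := fun i =>
        (hconn.dist_eq_zero_iff.1 (hDk (hf i)).2).symm
      exact ((hf1 0).ne ((h0 _).trans (h0 _).symm)).elim
    | succ n => exact ⟨n, rfl⟩
  have hDd : ∀ x ∈ D, G.dist v x = n + 1 := fun x hx => (hDk hx).2
  obtain ⟨X, Y, j, m, a, hX, hY, hmj, hjn, hag, hadj, hcf, hXa⟩ :=
    exists_gadget hconn h3 heven f (fun i => hDd _ (hf i))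
  by_cases hsmall : δ ≤ 30
  · -- The bound on the leftovers is vacuous, so a single vertex serves as last block.
    obtain ⟨K, hKA, hKc, hKn, -⟩ := exists_comp
      (A := (D \ {x | G.Adj (X n) x}) \ {x | G.Adj (Y j) x}) (t := 1) (fun h =>
        hDn (((h.of_diff h3).of_diff h3).mono subset_rfl (by omega)))
    obtain ⟨X, Y, S, l, g, hKT, hSD, ⟨w₁, hw₁, hyw⟩, hSK⟩ :=
      exists_full_gadget h3 hX hY hmj hjn hag hadj hcf hDd hDc (fun x hx => (hKA hx).1.1)
        (nonempty_of_not_setCol hKn) (fun x hx => ⟨(hKA hx).1.2, (hKA hx).2⟩) ⟨f a, hf a, hXa⟩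
    obtain ⟨w₂, hw₂, h12⟩ : ∃ w₂ ∈ K, G.Adj w₁ w₂ := by
      obtain ⟨x, hx, y, hy, hxy⟩ := exists_adj_of_not_setCol_one hKn
      obtain ⟨z, hz, hzw⟩ : ∃ z ∈ K, z ∉ ({w₁} : Set V) := by
        by_cases e : x = w₁
        · exact ⟨y, hy, fun h => hxy.ne (e.trans (Set.mem_singleton_iff.1 h).symm)⟩
        · exact ⟨x, hx, e⟩
      obtain ⟨b, hb, -, c, -, hc, hbc⟩ := exists_bdry hKc hz hzw hw₁ rfl
      rw [Set.mem_singleton_iff] at hc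
      exact ⟨b, hb, hc ▸ hbc.symm⟩
    -- The `5`-cycle of the block may be taken anywhere away from the tail.
    obtain ⟨f', hf'⟩ := exists_C5 c' hc' hC h3 heven
      (A := (Set.univ \ {x | G.Adj w₁ x}) \ {x | G.Adj w₂ x}) (fun h => by
        have := hG _ ((h.of_diff h3).of_diff h3)
        omega)
    have hsub : ∀ z ∈ insert w₁ ({w₂} : Set V), z = w₁ ∨ z = w₂ := fun z hz => by simpa using hz
    have hsubK : ∀ z ∈ insert w₁ ({w₂} : Set V), z ∈ K := fun z hz => by
      rcases hsub z hz with rfl | rfl <;> assumption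
    obtain ⟨P, hP1, hP2, -⟩ := exists_pcp hconn h3 g f' (H := {w₂}) hyw h12 rfl
      (by simpa using h12.ne) (connected_singleton G w₂) (fun h hh _ => hh)
      (fun z hz => hDd z (hKA (hsubK z hz)).1.1) (fun z hz => (hKT z (hsubK z hz)).1)
      (fun z hz => (hKT z (hsubK z hz)).2)
      (fun i z hz => by
        have h1 : ¬ G.Adj w₁ (f' i) := (hf' i).1.2
        have h2 : ¬ G.Adj w₂ (f' i) := (hf' i).2
        rcases hsub z hz with rfl | rfl
        · exact ⟨fun e => h2 (e ▸ h12.symm), fun h => h1 h.symm⟩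
        · exact ⟨fun e => h1 (e ▸ h12), fun h => h2 h.symm⟩)
      (fun i hi z hz => by
        refine ⟨fun e => (hSD i hi).2 (e ▸ hsubK z hz), fun h => ?_⟩
        have hil : i = l := by
          by_contra hne
          exact hSK i (by omega) z (hsubK z hz) h
        subst hil
        rcases hsub z hz with rfl | rfl
        · exact ⟨rfl, rfl⟩
        · exact (no_tri h3 hyw h12 h).elim)
    refine ⟨P, hP1, hP2, ?_⟩
    have h1 : (δ : ℝ) ≤ 30 := by exact_mod_cast hsmall
    have h2 : (0 : ℝ) ≤ P.leftovers := Nat.cast_nonneg _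
    linarith
  · -- Removing the seven neighbourhoods of `X n`, `Y j` and the `5`-cycle costs seven colours.
    obtain ⟨K, hKA, hKc, hKn, -⟩ := exists_comp
      (A := ((D \ {x | G.Adj (X n) x}) \ {x | G.Adj (Y j) x}) \ {x | ∃ i, G.Adj (f i) x})
      (t := d - 10 + 2) (fun h =>
        hDn ((((h.of_diff5 h3).of_diff h3).of_diff h3).mono subset_rfl (by omega)))
    obtain ⟨X, Y, S, l, g, hKT, hSD, hyw, hSK⟩ :=
      exists_full_gadget h3 hX hY hmj hjn hag hadj hcf hDd hDc (fun x hx => (hKA hx).1.1.1)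
        (nonempty_of_not_setCol hKn) (fun x hx => ⟨(hKA hx).1.1.2, (hKA hx).1.2⟩)
        ⟨f a, hf a, hXa⟩
    obtain ⟨w₁, w₂, H, hw₁, hHK, hyw₁, h12, hw₂, hw₁H, hHc, hH1, hH2, hHn⟩ :=
      exists_tail h3 hKc hKn hyw
    have hsubK : ∀ z ∈ insert w₁ H, z ∈ K := fun z hz => Set.insert_subset hw₁ hHK hz
    obtain ⟨P, hP1, hP2, hP3⟩ := exists_pcp hconn h3 g f (H := H) hyw₁ h12 hw₂ hw₁H hHc hH1
      (fun z hz => hDd z (hKA (hsubK z hz)).1.1.1) (fun z hz => (hKT z (hsubK z hz)).1)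
      (fun z hz => (hKT z (hsubK z hz)).2)
      (fun i z hz => by
        have hz' := (hKA (hsubK z hz)).2
        exact ⟨fun e => hz' ⟨i + 1, e ▸ (hf1 i).symm⟩, fun h => hz' ⟨i, h⟩⟩)
      (fun i hi z hz => by
        refine ⟨fun e => (hSD i hi).2 (e ▸ hsubK z hz), fun h => ?_⟩
        have hil : i = l := by
          by_contra hne
          exact hSK i (by omega) z (hsubK z hz) h
        subst hil
        rcases hz with rfl | hz
        · exact ⟨rfl, rfl⟩
        · exact (hH2 z hz h).elim)
    refine ⟨P, hP1, hP2, ?_⟩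
    have hlt := lt_chiSet hHn
    rw [← hP3] at hlt
    have h1 : δ ≤ 2 * P.leftovers + 30 := by
      unfold PCP.leftovers
      omega
    have h2 : (δ : ℝ) ≤ 2 * P.leftovers + 30 := by exact_mod_cast h1
    linarith
end
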